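/- arXiv:2106.08949 — 3 statements merged into one kernel-verified Lean document; each statement's English description precedes it below -/
import Mathlib

section
/- Let d ≥ 1 be an integer, α ∈ (0,1], p ∈ [1,∞), and for a > 0 let w(a) be the positive weight sequence determined by w_1(a)⋯w_n(a) = exp(a·n^α) for all n ≥ 1 (that is, w_n(a) = exp(a(n^α − (n−1)^α))). Let Λ ⊂ (0,∞)^d be σ-compact. Then the following are equivalent: (a) the family (B_{w(λ(1))} × ⋯ × B_{w(λ(d))})_{λ∈Λ} has a common hypercyclic vector in ℓp(ℕ)^d; (b) the family (B_{w(λ(1))} × ⋯ × B_{w(λ(d))})_{λ∈Λ} has a common hypercyclic algebra in ℓp(ℕ)^d for the coordinatewise product. -/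
open scoped ENNReal
open Finset

noncomputable section

/-- The space `ℓᵖ(ℕ)` of `p`-summable complex sequences. -/
abbrev lpC (p : ℝ≥0∞) : Type := lp (fun _ : ℕ => ℂ) p

/-- `T` is the product operator `B_{w(lam 0)} × ⋯ × B_{w(lam (d-1))}` of weighted backward
shifts, the weight sequence of the `i`-th factor being `(w (lam i) n)_{n ≥ 1}`. -/
def IsProductShift (p : ℝ≥0∞) [Fact (1 ≤ p)] (d : ℕ) (w : ℝ → ℕ → ℝ)
    (T : (Fin d → lpC p) →L[ℂ] (Fin d → lpC p)) (lam : Fin d → ℝ) : Prop :=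
  ∀ (v : Fin d → lpC p) (i : Fin d) (n : ℕ),
    (T v) i n = (w (lam i) (n + 1) : ℂ) * v i (n + 1)

/-- The family `T lam`, `lam ∈ S`, admits a common hypercyclic algebra for the coordinatewise
product: there is a non-unital subalgebra `A ≠ {0}` of `(ℓᵖ(ℕ))^d` (closed under addition,
scalar multiplication and the componentwise coordinatewise product) every nonzero element of
which is a common hypercyclic vector for the family. -/
def CommonHypercyclicAlgebraCW (p : ℝ≥0∞) [Fact (1 ≤ p)] (d : ℕ) (S : Set (Fin d → ℝ))
    (T : (Fin d → ℝ) → ((Fin d → lpC p) →L[ℂ] (Fin d → lpC p))) : Prop :=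
  ∃ A : Set (Fin d → lpC p),
    (0 : Fin d → lpC p) ∈ A ∧
    (∀ x ∈ A, ∀ y ∈ A, x + y ∈ A) ∧
    (∀ (c : ℂ), ∀ x ∈ A, c • x ∈ A) ∧
    (∀ x ∈ A, ∀ y ∈ A, ∃ z ∈ A, ∀ (i : Fin d) (n : ℕ), z i n = x i n * y i n) ∧
    (∃ x ∈ A, x ≠ 0) ∧
    (∀ x ∈ A, x ≠ 0 → ∀ lam ∈ S, Dense (Set.range fun n : ℕ => ((T lam) ^ (n + 1)) x))

/-- The weight sequence with partial products `w 1 (a) ⋯ w n (a) = exp (a * n ^ α)`,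
i.e. `w n (a) = exp (a * (n ^ α - (n - 1) ^ α))`. -/
def wExp (α a : ℝ) (n : ℕ) : ℝ := Real.exp (a * ((n : ℝ) ^ α - ((n : ℝ) - 1) ^ α))

section Helpers

open Filter Topology

lemma p_ne_zero' (p : ℝ≥0∞) [hp : Fact (1 ≤ p)] : p ≠ 0 := by
  have := hp.out
  intro h
  simp [h] at this

/-- Domination of norms in the product space. -/
lemma pi_norm_mono {p : ℝ≥0∞} [Fact (1 ≤ p)] {d : ℕ} {x y : Fin d → lpC p} {c : ℝ} (hc : 0 ≤ c)
    (h : ∀ i n, ‖x i n‖ ≤ c * ‖y i n‖) : ‖x‖ ≤ c * ‖y‖ := by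
  refine (pi_norm_le_iff_of_nonneg (by positivity)).2 fun i => ?_
  have h1 : ‖x i‖ ≤ ‖((c : ℂ) • y i : lpC p)‖ := by
    refine lp.norm_mono (p_ne_zero' p) fun n => ?_
    rw [lp.coeFn_smul, Pi.smul_apply, norm_smul, Complex.norm_real, Real.norm_eq_abs,
      abs_of_nonneg hc]
    exact h i n
  rw [norm_smul] at h1
  have h2 : ‖(c : ℂ)‖ = c := by simp [abs_of_nonneg hc]
  rw [h2] at h1
  exact h1.trans (mul_le_mul_of_nonneg_left (norm_le_pi_norm y i) hc)

lemma coord_le_norm {p : ℝ≥0∞} [Fact (1 ≤ p)] {d : ℕ} (x : Fin d → lpC p) (i : Fin d) (n : ℕ) :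
    ‖x i n‖ ≤ ‖x‖ :=
  (lp.norm_apply_le_norm (p_ne_zero' p) (x i) n).trans (norm_le_pi_norm x i)

lemma mul_mem {p : ℝ≥0∞} [Fact (1 ≤ p)] (x y : lpC p) : Memℓp (fun n => x n * y n) p := by
  refine (lp.memℓp (((‖x‖ : ℝ) : ℂ) • y : lpC p)).mono' fun n => ?_
  have := lp.norm_apply_le_norm (p_ne_zero' p) x n
  simp only [norm_mul, lp.coeFn_smul, Pi.smul_apply, smul_eq_mul, Complex.norm_real, norm_norm]
  gcongr

/-- Coordinatewise product on `ℓᵖ`. -/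
def mulLp {p : ℝ≥0∞} [Fact (1 ≤ p)] (x y : lpC p) : lpC p := ⟨fun n => x n * y n, mul_mem x y⟩

lemma mulLp_apply {p : ℝ≥0∞} [Fact (1 ≤ p)] (x y : lpC p) (n : ℕ) :
    mulLp x y n = x n * y n := rfl

def mulLpL {p : ℝ≥0∞} [Fact (1 ≤ p)] : lpC p →L[ℂ] lpC p →L[ℂ] lpC p :=
  LinearMap.mkContinuous₂
    (LinearMap.mk₂ ℂ mulLp
      (fun x x' y => by
        apply lp.ext; funext n
        simp only [mulLp_apply, lp.coeFn_add, Pi.add_apply]; ring)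
      (fun c x y => by
        apply lp.ext; funext n
        simp only [mulLp_apply, lp.coeFn_smul, Pi.smul_apply, smul_eq_mul]; ring)
      (fun x y y' => by
        apply lp.ext; funext n
        simp only [mulLp_apply, lp.coeFn_add, Pi.add_apply]; ring)
      (fun c x y => by
        apply lp.ext; funext n
        simp only [mulLp_apply, lp.coeFn_smul, Pi.smul_apply, smul_eq_mul]; ring)) 1
    (fun x y => by
      have h1 : ‖mulLp x y‖ ≤ ‖(((‖x‖ : ℝ) : ℂ) • y : lpC p)‖ := by
        refine lp.norm_mono (p_ne_zero' p) fun n => ?_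
        have := lp.norm_apply_le_norm (p_ne_zero' p) x n
        simp only [mulLp_apply, norm_mul, lp.coeFn_smul, Pi.smul_apply, smul_eq_mul,
          Complex.norm_real, norm_norm]
        gcongr
      rw [norm_smul, Complex.norm_real, norm_norm] at h1
      simpa using h1)

lemma continuous_mulLp {p : ℝ≥0∞} [Fact (1 ≤ p)] :
    Continuous fun z : lpC p × lpC p => mulLp z.1 z.2 :=
  (mulLpL (p := p)).continuous₂

/-- `pwLp k x = x ^ (k+1)` coordinatewise. -/
def pwLp {p : ℝ≥0∞} [Fact (1 ≤ p)] : ℕ → lpC p → lpC p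
  | 0, x => x
  | k + 1, x => mulLp (pwLp k x) x

lemma pwLp_apply {p : ℝ≥0∞} [Fact (1 ≤ p)] (k : ℕ) (x : lpC p) (n : ℕ) :
    pwLp k x n = x n ^ (k + 1) := by
  induction k with
  | zero => simp [pwLp]
  | succ k ih => rw [pwLp, mulLp_apply, ih]; ring

lemma continuous_pwLp {p : ℝ≥0∞} [Fact (1 ≤ p)] (k : ℕ) : Continuous (pwLp (p := p) k) := by
  induction k with
  | zero => exact continuous_id
  | succ k ih =>
    have : pwLp (p := p) (k + 1) = fun x => mulLp (pwLp k x) x := by funext x; rfl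
    rw [this]
    exact continuous_mulLp.comp (ih.prodMk continuous_id)

def pw {p : ℝ≥0∞} [Fact (1 ≤ p)] {d : ℕ} (k : ℕ) (x : Fin d → lpC p) : Fin d → lpC p :=
  fun i => pwLp k (x i)

lemma pw_apply {p : ℝ≥0∞} [Fact (1 ≤ p)] {d : ℕ} (k : ℕ) (x : Fin d → lpC p) (i : Fin d) (n : ℕ) :
    pw k x i n = x i n ^ (k + 1) := pwLp_apply k (x i) n

lemma continuous_pw {p : ℝ≥0∞} [Fact (1 ≤ p)] {d : ℕ} (k : ℕ) :
    Continuous (pw (p := p) (d := d) k) :=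
  continuous_pi fun i => (continuous_pwLp k).comp (continuous_apply i)

/-- Tails are small. -/
lemma tail_small {p : ℝ≥0∞} [Fact (1 ≤ p)] (hp : p ≠ ⊤) (f : lpC p) {ε : ℝ} (hε : 0 < ε) :
    ∀ᶠ L : ℕ in atTop, ∀ g : lpC p, (∀ n < L, g n = 0) → (∀ n, ‖g n‖ ≤ ‖f n‖) → ‖g‖ < ε := by
  have h := (lp.hasSum_single hp f).tendsto_sum_nat
  have h2 := (Metric.tendsto_nhds.1 h) ε hε
  filter_upwards [h2] with L hL g h0 hg
  rw [dist_eq_norm, ← norm_neg] at hL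
  refine lt_of_le_of_lt (lp.norm_mono (p_ne_zero' p) fun n => ?_) hL
  have hs : (∑ i ∈ range L, lp.single p i (f i) : lpC p) n = if n < L then f n else 0 := by
    rw [lp.coeFn_sum, Finset.sum_apply]
    simp [lp.single_apply, Pi.single_apply]
  rw [lp.coeFn_neg, Pi.neg_apply, lp.coeFn_sub, Pi.sub_apply, hs]
  by_cases hn : n < L
  · simp [h0 n hn]
  · simpa [hn] using hg n

lemma summable_exp_rpow {α c : ℝ} (hα : 0 < α) (hc : 0 < c) :
    Summable fun n : ℕ => Real.exp (-c * (n : ℝ) ^ α) := by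
  have h1 := (isLittleO_exp_neg_mul_rpow_atTop hc (-2 / α)).comp_tendsto
    ((tendsto_rpow_atTop hα).comp tendsto_natCast_atTop_atTop)
  refine summable_of_isBigO_nat (g := fun n : ℕ => (n : ℝ) ^ (-2 : ℝ))
    (Real.summable_nat_rpow.2 (by norm_num)) ?_
  refine h1.isBigO.congr_right fun n => ?_
  simp only [Function.comp]
  rw [← Real.rpow_mul (by positivity)]
  congr 1
  field_simp

lemma exp_mem {p : ℝ≥0∞} [Fact (1 ≤ p)] {α c : ℝ} (C : ℝ) (hα : 0 < α) (hc : 0 < c) :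
    Memℓp (fun n : ℕ => ((C * Real.exp (-c * (n : ℝ) ^ α) : ℝ) : ℂ)) p := by
  refine Memℓp.of_exponent_ge (q := 1) ?_ Fact.out
  refine memℓp_gen ?_
  have := (summable_exp_rpow hα hc).mul_left |C|
  refine this.congr fun n => ?_
  rw [Complex.norm_real, Real.norm_eq_abs, abs_mul, abs_of_pos (Real.exp_pos _)]
  simp

lemma iter_apply {p : ℝ≥0∞} [Fact (1 ≤ p)] {d : ℕ} {α : ℝ} {lam : Fin d → ℝ}
    {T : (Fin d → lpC p) →L[ℂ] (Fin d → lpC p)} (hT : IsProductShift p d (wExp α) T lam)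
    (N : ℕ) (v : Fin d → lpC p) (i : Fin d) (n : ℕ) :
    (T ^ N) v i n
      = (Real.exp (lam i * (((n + N : ℕ) : ℝ) ^ α - (n : ℝ) ^ α)) : ℂ) * v i (n + N) := by
  induction N generalizing n with
  | zero => simp
  | succ N ih =>
    rw [pow_succ', mul_apply_eq_comp, hT, ih, wExp, ← mul_assoc, ← Complex.ofReal_mul,
      ← Real.exp_add]
    have : n + 1 + N = n + (N + 1) := by ring
    rw [this]
    congr 3
    push_cast
    ring_nf

lemma rpow_diff {α : ℝ} (hα0 : 0 < α) (hα1 : α ≤ 1) (n : ℕ) :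
    0 ≤ ((n + 1 : ℕ) : ℝ) ^ α - (n : ℝ) ^ α ∧ ((n + 1 : ℕ) : ℝ) ^ α - (n : ℝ) ^ α ≤ 1 := by
  constructor
  · rw [sub_nonneg]
    gcongr
    simp
  · have := NNReal.rpow_add_le_add_rpow (n : NNReal) 1 hα0.le hα1
    have h2 : (((n : NNReal) + 1) ^ α : NNReal) ≤ ((n : NNReal) ^ α + 1 ^ α : NNReal) := this
    have h3 := NNReal.coe_le_coe.2 h2
    push_cast at h3
    rw [Real.one_rpow] at h3
    push_cast
    linarith

lemma exp_sub_bound (t s : ℝ) : |Real.exp t - Real.exp s| ≤ (Real.exp |t - s| - 1) * Real.exp s := by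
  have h1 : Real.exp t - Real.exp s = (Real.exp (t - s) - 1) * Real.exp s := by
    rw [sub_mul, ← Real.exp_add]; ring_nf
  rw [h1, abs_mul, abs_of_pos (Real.exp_pos s)]
  gcongr
  have h2 : Real.exp (t - s) ≤ Real.exp |t - s| := Real.exp_le_exp.2 (le_abs_self _)
  have h3 : Real.exp (-|t - s|) ≤ Real.exp (t - s) := Real.exp_le_exp.2 (neg_abs_le _)
  have h4 := Real.add_one_le_exp |t - s|
  have h5 := Real.add_one_le_exp (-|t - s|)
  rw [abs_le]
  constructor <;> linarith

lemma continuousOn_T {p : ℝ≥0∞} [Fact (1 ≤ p)] {d : ℕ} {α : ℝ} (hα0 : 0 < α) (hα1 : α ≤ 1)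
    {Λ : Set (Fin d → ℝ)} {T : (Fin d → ℝ) → ((Fin d → lpC p) →L[ℂ] (Fin d → lpC p))}
    (hT : ∀ lam ∈ Λ, IsProductShift p d (wExp α) (T lam) lam) : ContinuousOn T Λ := by
  intro a ha
  have key : ∀ b ∈ Λ, ‖T b - T a‖ ≤ (Real.exp ‖b - a‖ - 1) * ‖T a‖ := by
    intro b hb
    have h0 : 0 ≤ Real.exp ‖b - a‖ - 1 := by
      have := Real.add_one_le_exp ‖b - a‖
      have := norm_nonneg (b - a)
      linarith
    refine ContinuousLinearMap.opNorm_le_bound _ (by positivity) fun v => ?_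
    rw [mul_assoc]
    refine le_trans ?_ (mul_le_mul_of_nonneg_left ((T a).le_opNorm v) h0)
    refine pi_norm_mono h0 fun i n => ?_
    have e1 : ((T b - T a) v) i n = (T b v) i n - (T a v) i n := rfl
    rw [e1, hT b hb, hT a ha, ← sub_mul, norm_mul, norm_mul, ← mul_assoc, ← Complex.ofReal_sub,
      Complex.norm_real, Complex.norm_real, Real.norm_eq_abs, Real.norm_eq_abs]
    gcongr
    simp only [wExp]
    have e2 : ((n + 1 : ℕ) : ℝ) - 1 = n := by push_cast; ring
    rw [e2, abs_of_pos (Real.exp_pos (a i * _))]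
    refine (exp_sub_bound _ _).trans ?_
    gcongr
    rw [← sub_mul, abs_mul]
    have h3 := rpow_diff hα0 hα1 n
    rw [abs_of_nonneg h3.1]
    have h4 : |b i - a i| ≤ ‖b - a‖ := norm_le_pi_norm (b - a) i
    nlinarith [abs_nonneg (b i - a i)]
  rw [ContinuousWithinAt, tendsto_iff_norm_sub_tendsto_zero]
  refine squeeze_zero' (g := fun b => (Real.exp ‖b - a‖ - 1) * ‖T a‖)
    (Eventually.of_forall fun _ => norm_nonneg _) ?_ ?_
  · filter_upwards [self_mem_nhdsWithin] with b hb using key b hb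
  · have : Continuous fun b : Fin d → ℝ => (Real.exp ‖b - a‖ - 1) * ‖T a‖ := by fun_prop
    have h := this.tendsto a
    simp only [sub_self, norm_zero, Real.exp_zero, zero_mul] at h
    exact h.mono_left nhdsWithin_le_nhds

lemma orbit_late {E : Type*} [NormedAddCommGroup E] [NormedSpace ℂ E] [Nontrivial E]
    (f : ℕ → E) (hf : Dense (Set.range f)) (v : E) {ε : ℝ} (hε : 0 < ε) (L : ℕ) :
    ∃ N ≥ L, ‖f N - v‖ < ε := by
  have : ∀ x : E, NeBot (𝓝[≠] x) := fun x => Module.punctured_nhds_neBot ℂ E x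
  have hd := hf.sdiff_finite ((Set.finite_lt_nat L).image f)
  obtain ⟨y, ⟨⟨N, rfl⟩, hN⟩, hy⟩ := hd.exists_dist_lt v hε
  refine ⟨N, ?_, ?_⟩
  · by_contra h
    exact hN ⟨N, by simpa using h, rfl⟩
  · rw [← dist_eq_norm, dist_comm]; exact hy

end Helpers

section Core

open Filter Topology

lemma core {d : ℕ} {α : ℝ} (hα0 : 0 < α) (hα1 : α ≤ 1)
    {p : ℝ≥0∞} [Fact (1 ≤ p)] (hp : p ≠ ⊤) [Nontrivial (Fin d → lpC p)]
    {Λ : Set (Fin d → ℝ)} (hΛpos : ∀ lam ∈ Λ, ∀ i, 0 < lam i)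
    {T : (Fin d → ℝ) → ((Fin d → lpC p) →L[ℂ] (Fin d → lpC p))}
    (hT : ∀ lam ∈ Λ, IsProductShift p d (wExp α) (T lam) lam)
    (x : Fin d → lpC p)
    (hx : ∀ lam ∈ Λ, Dense (Set.range fun n : ℕ => ((T lam) ^ (n + 1)) x))
    {K : Set (Fin d → ℝ)} (hK : IsCompact K) (hKΛ : K ⊆ Λ) (m : ℕ)
    (v : Fin d → lpC p) (M : ℕ) (hv : ∀ i n, M ≤ n → v i n = 0) {ε η : ℝ} (hε : 0 < ε) (hη : 0 < η)
    (u0 : Fin d → lpC p) :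
    ∃ u : Fin d → lpC p, ‖u - u0‖ < η ∧ ∀ lam ∈ K, ∃ N : ℕ,
      ‖((T lam) ^ (N + 1)) (pw m u) - v‖ < ε ∧ ‖((T lam) ^ (N + 1)) (pw (m + 1) u)‖ < ε := by
  rcases K.eq_empty_or_nonempty with rfl | hKne
  · exact ⟨u0, by simpa using hη, by simp⟩
  have hδ : ∀ i, ∃ δ > 0, ∀ lam ∈ K, δ ≤ lam i := fun i => by
    obtain ⟨a, ha, h⟩ := hK.exists_isMinOn hKne (continuous_apply i).continuousOn
    exact ⟨a i, hΛpos a (hKΛ ha) i, fun lam hl => h hl⟩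
  choose δ hδ0 hδ using hδ
  have hR : ∃ R, 0 ≤ R ∧ ∀ lam ∈ K, ∀ i, lam i ≤ R := by
    obtain ⟨R, hR⟩ := hK.isBounded.exists_norm_le
    refine ⟨|R|, abs_nonneg _, fun lam hl i => ?_⟩
    have h1 := norm_le_pi_norm lam i
    exact (le_abs_self _).trans (h1.trans ((hR lam hl).trans (le_abs_self R)))
  obtain ⟨R, hR0, hR⟩ := hR
  set C : ℝ := max 1 ((‖v‖ + ε) * Real.exp (R * (M : ℝ) ^ α)) with hC
  have hC1 : 1 ≤ C := le_max_left _ _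
  set ρ : ℝ := ε / 2 / (‖v‖ + ε) with hρ
  have hvε : 0 < ‖v‖ + ε := by positivity
  have hρ0 : 0 < ρ := by positivity
  let g : Fin d → lpC p := fun i => ⟨_, exp_mem (p := p) C hα0 (c := δ i / (m + 1))
    (div_pos (hδ0 i) (by positivity))⟩
  have hg : ∀ i n, ‖g i n‖ = C * Real.exp (-(δ i / (m + 1)) * (n : ℝ) ^ α) := fun i n => by
    change ‖((C * Real.exp (-(δ i / (m + 1)) * (n : ℝ) ^ α) : ℝ) : ℂ)‖ = _
    rw [Complex.norm_real, Real.norm_eq_abs, abs_of_nonneg (by positivity)]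
  have ev1 := eventually_all.2 fun i => tail_small hp (u0 i) (ε := η / 3) (by positivity)
  have ev2 := eventually_all.2 fun i => tail_small hp (g i) (ε := min (η / 3) ρ) (by positivity)
  obtain ⟨L, hL1, hL2⟩ := (ev1.and ev2).exists
  have hN : ∀ lam : Fin d → ℝ, ∃ N : ℕ, lam ∈ K → L ≤ N ∧ ‖((T lam) ^ (N + 1)) x - v‖ < ε := by
    intro lam
    by_cases hl : lam ∈ K
    · obtain ⟨N, h1, h2⟩ := orbit_late _ (hx lam (hKΛ hl)) v hε L
      exact ⟨N, fun _ => ⟨h1, h2⟩⟩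
    · exact ⟨0, fun h => absurd h hl⟩
  choose N hN using hN
  have hcT := (continuousOn_T hα0 hα1 hT).mono hKΛ
  obtain ⟨t, htK, ht⟩ := hK.elim_nhdsWithin_subcover
    (fun a => {b | ‖((T b) ^ (N a + 1)) x - v‖ < ε}) (fun a ha => by
      have h1 : ContinuousOn (fun b => ‖((T b) ^ (N a + 1)) x - v‖) K :=
        (((hcT.pow (N a + 1)).clm_apply continuousOn_const).sub continuousOn_const).norm
      exact (h1 a ha).eventually (gt_mem_nhds (hN a ha).2))
  let S : Set ℕ := {l | ∃ a ∈ t, ∃ n < M, l = n + (N a + 1)}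
  have hSL : ∀ l ∈ S, L ≤ l := by
    rintro l ⟨a, ha, n, -, rfl⟩
    have := (hN a (htK a ha)).1
    omega
  have hroot : ∀ i l, ∃ z : ℂ, z ^ (m + 1) = x i l := fun i l =>
    IsAlgClosed.exists_pow_nat_eq _ (Nat.succ_pos m)
  choose r hr using hroot
  have hrg : ∀ i, ∀ l ∈ S, ‖r i l‖ ≤ ‖g i l‖ := by
    rintro i l ⟨a, ha, n, hn, rfl⟩
    have haK := htK a ha
    have h1 := coord_le_norm (((T a) ^ (N a + 1)) x) i n
    have h2 : ‖((T a) ^ (N a + 1)) x‖ ≤ ‖v‖ + ε := by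
      have := norm_le_norm_add_norm_sub' (((T a) ^ (N a + 1)) x) v
      linarith [(hN a haK).2]
    rw [iter_apply (hT a (hKΛ haK)), norm_mul, Complex.norm_real, Real.norm_eq_abs,
      abs_of_pos (Real.exp_pos _)] at h1
    set l := n + (N a + 1) with hl
    rw [mul_sub, Real.exp_sub] at h1
    have h3 : ‖x i l‖ ≤ C * Real.exp (-δ i * (l : ℝ) ^ α) := by
      have e1 : ‖x i l‖ ≤ (‖v‖ + ε) * Real.exp (a i * (n : ℝ) ^ α) * Real.exp (-(a i * (l : ℝ) ^ α)) := by
        have h4 := h1.trans h2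
        rw [Real.exp_neg]
        have := Real.exp_pos (a i * (n : ℝ) ^ α)
        have := Real.exp_pos (a i * (l : ℝ) ^ α)
        rw [← div_eq_mul_inv, le_div_iff₀ (by positivity)]
        rw [div_mul_eq_mul_div, div_le_iff₀ (by positivity)] at h4
        linarith
      refine e1.trans ?_
      have e2 : a i * (n : ℝ) ^ α ≤ R * (M : ℝ) ^ α := by
        have := hR a haK i
        gcongr
      have e3 : -(a i * (l : ℝ) ^ α) ≤ -δ i * (l : ℝ) ^ α := by
        have := hδ i a haK
        have h6 : (0 : ℝ) ≤ (l : ℝ) ^ α := by positivity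
        nlinarith
      refine mul_le_mul ?_ (Real.exp_le_exp.2 e3) (Real.exp_pos _).le (by positivity)
      refine le_trans ?_ (le_max_right _ _)
      gcongr
    rw [hg]
    refine le_of_pow_le_pow_left₀ (n := m + 1) (Nat.succ_ne_zero m) (by positivity) ?_
    rw [← norm_pow, hr, mul_pow, ← Real.exp_nat_mul]
    refine h3.trans ?_
    have e4 : ((m + 1 : ℕ) : ℝ) * (-(δ i / (m + 1)) * (l : ℝ) ^ α) = -δ i * (l : ℝ) ^ α := by
      push_cast
      field_simp
    rw [e4]
    gcongr
    exact le_self_pow₀ hC1 (Nat.succ_ne_zero m)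
  classical
  let h1 : Fin d → lpC p := fun i => ⟨fun l => if l < L then 0 else u0 i l,
    (lp.memℓp (u0 i)).mono' fun l => by split_ifs <;> simp⟩
  let h2 : Fin d → lpC p := fun i => ⟨fun l => if l ∈ S then r i l else 0,
    (lp.memℓp (g i)).mono' fun l => by
      split_ifs with h
      · exact hrg i l h
      · simp⟩
  have h1a : ∀ i l, h1 i l = if l < L then 0 else u0 i l := fun _ _ => rfl
  have h2a : ∀ i l, h2 i l = if l ∈ S then r i l else 0 := fun _ _ => rfl
  have h1n : ∀ i, ‖h1 i‖ < η / 3 := fun i => hL1 i (h1 i)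
    (fun l hl => by rw [h1a, if_pos hl]) (fun l => by rw [h1a]; split_ifs <;> simp)
  have h2n : ∀ i, ‖h2 i‖ < min (η / 3) ρ := fun i => hL2 i (h2 i)
    (fun l hl => by rw [h2a, if_neg]; intro h; exact absurd (hSL l h) (by omega))
    (fun l => by
      rw [h2a]; split_ifs with h
      · exact hrg i l h
      · simp)
  let u : Fin d → lpC p := fun i => u0 i - h1 i + h2 i
  have hu : ∀ i l, L ≤ l → u i l = if l ∈ S then r i l else 0 := fun i l hl => by
    change (u0 i - h1 i + h2 i : lpC p) l = _
    rw [lp.coeFn_add, Pi.add_apply, lp.coeFn_sub, Pi.sub_apply, h1a, if_neg (by omega), sub_self,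
      zero_add, h2a]
  refine ⟨u, ?_, ?_⟩
  · refine (pi_norm_lt_iff hη).2 fun i => ?_
    have : (u - u0) i = - h1 i + h2 i := by
      change (u0 i - h1 i + h2 i) - u0 i = _
      abel
    rw [this]
    refine (norm_add_le _ _).trans_lt ?_
    rw [norm_neg]
    have := (h2n i).trans_le (min_le_left _ _)
    linarith [h1n i]
  · intro lam hl
    have := ht hl
    simp only [Set.mem_iUnion] at this
    obtain ⟨a, ha, hla⟩ := this
    have hla : ‖((T lam) ^ (N a + 1)) x - v‖ < ε := hla
    have hNL := (hN a (htK a ha)).1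
    refine ⟨N a, ?_, ?_⟩
    · refine lt_of_le_of_lt ?_ hla
      rw [← one_mul ‖((T lam) ^ (N a + 1)) x - v‖]
      refine pi_norm_mono zero_le_one fun i n => ?_
      rw [one_mul]
      change ‖((T lam) ^ (N a + 1)) (pw m u) i n - v i n‖ ≤ ‖((T lam) ^ (N a + 1)) x i n - v i n‖
      rw [iter_apply (hT lam (hKΛ hl)), iter_apply (hT lam (hKΛ hl)), pw_apply,
        hu i _ (by omega)]
      split_ifs with h
      · rw [hr]
      · have hMn : M ≤ n := by
          by_contra hcon
          exact h ⟨a, ha, n, by omega, rfl⟩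
        simp [hv i n hMn]
    · have hb : ‖((T lam) ^ (N a + 1)) (pw (m + 1) u)‖ ≤ ρ * ‖((T lam) ^ (N a + 1)) x‖ := by
        refine pi_norm_mono hρ0.le fun i n => ?_
        rw [iter_apply (hT lam (hKΛ hl)), iter_apply (hT lam (hKΛ hl)), pw_apply,
          hu i _ (by omega)]
        split_ifs with h
        · rw [pow_succ, hr, norm_mul, norm_mul, norm_mul]
          have h5 : ‖r i (n + (N a + 1))‖ ≤ ρ := by
            have h6 := lp.norm_apply_le_norm (p_ne_zero' p) (h2 i) (n + (N a + 1))
            rw [h2a, if_pos h] at h6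
            exact h6.trans ((h2n i).trans_le (min_le_right _ _)).le
          calc _ = ‖r i (n + (N a + 1))‖ * (‖(Real.exp (lam i * (((n + (N a + 1) : ℕ) : ℝ) ^ α
                - (n : ℝ) ^ α)) : ℂ)‖ * ‖x i (n + (N a + 1))‖) := by ring
            _ ≤ _ := by gcongr
        · simp only [ne_eq, Nat.add_eq_zero_iff, one_ne_zero, and_false, not_false_eq_true,
            zero_pow, mul_zero, norm_zero]
          positivity
      have h7 : ‖((T lam) ^ (N a + 1)) x‖ ≤ ‖v‖ + ε := by
        have := norm_le_norm_add_norm_sub' (((T lam) ^ (N a + 1)) x) v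
        linarith
      have h8 : ρ * (‖v‖ + ε) = ε / 2 := by
        rw [hρ]; field_simp
      calc _ ≤ _ := hb
        _ ≤ ρ * (‖v‖ + ε) := by gcongr
        _ < ε := by rw [h8]; linarith

/-- the sets for the Baire argument -/
def baireSet {d : ℕ} {p : ℝ≥0∞} [Fact (1 ≤ p)]
    (T : (Fin d → ℝ) → ((Fin d → lpC p) →L[ℂ] (Fin d → lpC p)))
    (K : Set (Fin d → ℝ)) (m : ℕ) (v : Fin d → lpC p) (ε : ℝ) : Set (Fin d → lpC p) :=
  {u | ∀ lam ∈ K, ∃ N : ℕ,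
      ‖((T lam) ^ (N + 1)) (pw m u) - v‖ < ε ∧ ‖((T lam) ^ (N + 1)) (pw (m + 1) u)‖ < ε}

lemma isOpen_baireSet {d : ℕ} {p : ℝ≥0∞} [Fact (1 ≤ p)]
    {T : (Fin d → ℝ) → ((Fin d → lpC p) →L[ℂ] (Fin d → lpC p))}
    {K : Set (Fin d → ℝ)} (hK : IsCompact K) (hT : ContinuousOn T K)
    (m : ℕ) (v : Fin d → lpC p) (ε : ℝ) : IsOpen (baireSet T K m v ε) := by
  have : CompactSpace K := isCompact_iff_compactSpace.1 hK
  have hT' : Continuous fun a : K => T a := continuousOn_iff_continuous_domRestrict.1 hT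
  have hc : ∀ m N : ℕ, Continuous fun q : K × (Fin d → lpC p) =>
      ((T q.1) ^ (N + 1)) (pw m q.2) := fun m N =>
    ((hT'.comp continuous_fst).pow (N + 1)).clm_apply ((continuous_pw m).comp continuous_snd)
  let O : Set (K × (Fin d → lpC p)) := ⋃ N : ℕ, {q | ‖((T q.1) ^ (N + 1)) (pw m q.2) - v‖ < ε ∧
    ‖((T q.1) ^ (N + 1)) (pw (m + 1) q.2)‖ < ε}
  have hO : IsOpen O := isOpen_iUnion fun N =>
    (isOpen_lt ((hc m N).sub continuous_const).norm continuous_const).inter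
      (isOpen_lt (hc (m + 1) N).norm continuous_const)
  have h := isClosedMap_snd_of_compactSpace (X := K) (Y := Fin d → lpC p) _ hO.isClosed_compl
  rw [← isOpen_compl_iff] at h
  convert h using 1
  ext u
  simp only [baireSet, Set.mem_ofPred_eq, Set.mem_compl_iff, Set.mem_image, Prod.exists, not_exists,
    not_and, O, Set.mem_iUnion]
  constructor
  · rintro h a b hab rfl
    obtain ⟨N, hN⟩ := h a a.2
    exact hab N hN.1 hN.2
  · intro h lam hl
    by_contra hcon
    push Not at hcon
    exact h ⟨lam, hl⟩ u (by simpa using hcon) rfl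

end Core

section Final

open Filter Topology

lemma exists_trunc {d : ℕ} {p : ℝ≥0∞} [Fact (1 ≤ p)] (hp : p ≠ ⊤) (v : Fin d → lpC p)
    {ε : ℝ} (hε : 0 < ε) :
    ∃ (v' : Fin d → lpC p) (M : ℕ), (∀ i n, M ≤ n → v' i n = 0) ∧ ‖v' - v‖ < ε := by
  obtain ⟨L, hL⟩ := (eventually_all.2 fun i => tail_small hp (v i) hε).exists
  let h1 : Fin d → lpC p := fun i => ⟨fun l => if l < L then 0 else v i l,
    (lp.memℓp (v i)).mono' fun l => by split_ifs <;> simp⟩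
  have h1a : ∀ i l, h1 i l = if l < L then 0 else v i l := fun _ _ => rfl
  refine ⟨v - h1, L, fun i n hn => ?_, ?_⟩
  · change (v i - h1 i : lpC p) n = 0
    rw [lp.coeFn_sub, Pi.sub_apply, h1a, if_neg (by omega), sub_self]
  · rw [sub_sub_cancel_left, norm_neg]
    exact (pi_norm_lt_iff hε).2 fun i => hL i (h1 i)
      (fun l hl => by rw [h1a, if_pos hl]) (fun l => by rw [h1a]; split_ifs <;> simp)

lemma exists_gen {d : ℕ} (hd : 1 ≤ d) {α : ℝ} (hα0 : 0 < α) (hα1 : α ≤ 1)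
    {p : ℝ≥0∞} [Fact (1 ≤ p)] (hp : p ≠ ⊤)
    {Λ : Set (Fin d → ℝ)} (hΛpos : ∀ lam ∈ Λ, ∀ i, 0 < lam i) (hΛσ : IsSigmaCompact Λ)
    {T : (Fin d → ℝ) → ((Fin d → lpC p) →L[ℂ] (Fin d → lpC p))}
    (hT : ∀ lam ∈ Λ, IsProductShift p d (wExp α) (T lam) lam)
    (x : Fin d → lpC p)
    (hx : ∀ lam ∈ Λ, Dense (Set.range fun n : ℕ => ((T lam) ^ (n + 1)) x)) :
    ∃ u : Fin d → lpC p, u ≠ 0 ∧ ∀ lam ∈ Λ, ∀ (m : ℕ) (w : Fin d → lpC p) (ε : ℝ), 0 < ε →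
      ∃ N : ℕ, ‖((T lam) ^ (N + 1)) (pw m u) - w‖ < ε ∧
        ‖((T lam) ^ (N + 1)) (pw (m + 1) u)‖ < ε := by
  have hne : ∃ u : Fin d → lpC p, u ≠ 0 := by
    refine ⟨fun _ => lp.single p 0 1, fun h => ?_⟩
    have h1 := congrFun h ⟨0, hd⟩
    have h2 : (lp.single p 0 (1 : ℂ) : lpC p) 0 = (0 : lpC p) 0 := by rw [h1]; rfl
    rw [lp.single_apply_self] at h2
    simp at h2
  have : Nontrivial (Fin d → lpC p) := by
    obtain ⟨u, hu⟩ := hne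
    exact ⟨⟨u, 0, hu⟩⟩
  rcases Λ.eq_empty_or_nonempty with rfl | ⟨a, ha⟩
  · obtain ⟨u, hu⟩ := hne
    exact ⟨u, hu, by simp⟩
  obtain ⟨K, hK, hKΛ⟩ := hΛσ
  have hsub : ∀ s, K s ⊆ Λ := fun s => hKΛ ▸ Set.subset_iUnion K s
  let D : ℕ → Fin d → lpC p := fun n => ((T a) ^ (n + 1)) x
  have hD : Dense (Set.range D) := hx a ha
  let F : ℕ × ℕ × ℕ × ℕ → Set (Fin d → lpC p) := fun q =>
    baireSet T (K q.1) q.2.1 (D q.2.2.1) (1 / ((q.2.2.2 : ℝ) + 1))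
  have hcT := continuousOn_T hα0 hα1 hT
  have hFo : ∀ q, IsOpen (F q) := fun q => isOpen_baireSet (hK _) (hcT.mono (hsub _)) _ _ _
  have hFd : ∀ q, Dense (F q) := by
    rintro ⟨s, m, k, r⟩
    rw [Metric.dense_iff]
    intro u0 η hη
    have hε : (0 : ℝ) < 1 / ((r : ℝ) + 1) := by positivity
    obtain ⟨v', M, hv', hvD⟩ := exists_trunc hp (D k) (half_pos hε)
    obtain ⟨u, hu, h⟩ := core hα0 hα1 hp hΛpos hT x hx (hK s) (hsub s) m v' M hv'
      (half_pos hε) hη u0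
    refine ⟨u, by rwa [mem_ball_iff_norm], fun lam hl => ?_⟩
    obtain ⟨N, h1, h2⟩ := h lam hl
    refine ⟨N, ?_, h2.trans (half_lt_self hε)⟩
    have := norm_sub_le_norm_sub_add_norm_sub (((T lam) ^ (N + 1)) (pw m u)) v' (D k)
    change ‖((T lam) ^ (N + 1)) (pw m u) - D k‖ < 1 / ((r : ℝ) + 1)
    linarith
  have hdense := dense_iInter_of_isOpen hFo hFd
  obtain ⟨u, hu0, hu⟩ := hdense.inter_open_nonempty {u | u ≠ 0} isOpen_ne hne
  refine ⟨u, hu0, fun lam hl m w ε hε => ?_⟩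
  obtain ⟨s, hs⟩ := Set.mem_iUnion.1 (hKΛ.symm ▸ hl : lam ∈ ⋃ s, K s)
  obtain ⟨_, ⟨k, rfl⟩, hk⟩ := hD.exists_dist_lt w (half_pos hε)
  obtain ⟨r, hr⟩ := exists_nat_one_div_lt (half_pos hε)
  obtain ⟨N, h1, h2⟩ := Set.mem_iInter.1 hu (s, m, k, r) lam hs
  refine ⟨N, ?_, by linarith [show _ < 1 / ((r : ℝ) + 1) from h2]⟩
  have := norm_sub_le_norm_sub_add_norm_sub (((T lam) ^ (N + 1)) (pw m u)) (D k) w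
  rw [dist_comm, dist_eq_norm] at hk
  have h1 : ‖((T lam) ^ (N + 1)) (pw m u) - D k‖ < 1 / ((r : ℝ) + 1) := h1
  linarith

lemma poly_dense {d : ℕ} {α : ℝ} {p : ℝ≥0∞} [Fact (1 ≤ p)] {lam : Fin d → ℝ}
    {T : (Fin d → lpC p) →L[ℂ] (Fin d → lpC p)} (hT : IsProductShift p d (wExp α) T lam)
    (u : Fin d → lpC p)
    (hu : ∀ (m : ℕ) (w : Fin d → lpC p) (ε : ℝ), 0 < ε →
      ∃ N : ℕ, ‖(T ^ (N + 1)) (pw m u) - w‖ < ε ∧ ‖(T ^ (N + 1)) (pw (m + 1) u)‖ < ε)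
    (x : Fin d → lpC p) (hx : x ≠ 0) (P : Polynomial ℂ)
    (hP : ∀ i n, x i n = u i n * P.eval (u i n)) :
    Dense (Set.range fun n : ℕ => (T ^ (n + 1)) x) := by
  have hP0 : P ≠ 0 := by
    rintro rfl
    apply hx
    funext i
    apply lp.ext
    funext n
    rw [hP]
    simp
  obtain ⟨Q, hQ, hXQ⟩ := Polynomial.exists_eq_pow_rootMultiplicity_mul_and_not_dvd P hP0 0
  set m := P.rootMultiplicity 0
  rw [Polynomial.C_0, sub_zero] at hQ hXQ
  rw [Polynomial.X_dvd_iff] at hXQ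
  set c := Q.coeff 0 with hc
  have hQ2 := Polynomial.divX_mul_X_add Q
  set R := Q.divX
  have hval : ∀ t : ℂ, t * P.eval t = c * t ^ (m + 1) + R.eval t * t ^ (m + 1 + 1) := fun t => by
    rw [hQ, ← hQ2]
    simp only [Polynomial.eval_mul, Polynomial.eval_pow, Polynomial.eval_X, Polynomial.eval_add,
      Polynomial.eval_C]
    ring
  obtain ⟨B, hB⟩ := (isCompact_closedBall (0 : ℂ) ‖u‖).exists_bound_of_continuousOn
    R.continuous.continuousOn
  have hB0 : 0 ≤ B := (norm_nonneg _).trans (hB 0 (by simp))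
  have hc0 : 0 < ‖c‖ := norm_pos_iff.2 hXQ
  rw [Metric.dense_iff]
  intro w ε hε
  obtain ⟨N, h1, h2⟩ := hu m (c⁻¹ • w) (ε / (‖c‖ + B)) (by positivity)
  refine ⟨_, ?_, ⟨N, rfl⟩⟩
  rw [mem_ball_iff_norm]
  simp only
  have e1 : (T ^ (N + 1)) x - w
      = c • ((T ^ (N + 1)) (pw m u) - c⁻¹ • w) + (T ^ (N + 1)) (x - c • pw m u) := by
    rw [map_sub, map_smul, smul_sub, smul_smul, mul_inv_cancel₀ hXQ, one_smul]
    abel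
  have e2 : ‖(T ^ (N + 1)) (x - c • pw m u)‖ ≤ B * ‖(T ^ (N + 1)) (pw (m + 1) u)‖ := by
    refine pi_norm_mono hB0 fun i n => ?_
    rw [iter_apply hT, iter_apply hT]
    have e3 : (x - c • pw m u) i (n + (N + 1))
        = R.eval (u i (n + (N + 1))) * pw (m + 1) u i (n + (N + 1)) := by
      change x i (n + (N + 1)) - c * pw m u i (n + (N + 1)) = _
      rw [hP, hval, pw_apply, pw_apply]
      ring
    rw [e3, norm_mul, norm_mul, norm_mul]
    have := hB (u i (n + (N + 1))) (by simpa using coord_le_norm u i _)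
    calc _ = ‖R.eval (u i (n + (N + 1)))‖ * (‖(Real.exp (lam i * (((n + (N + 1) : ℕ) : ℝ) ^ α
                - (n : ℝ) ^ α)) : ℂ)‖ * ‖pw (m + 1) u i (n + (N + 1))‖) := by ring
      _ ≤ _ := by gcongr
  rw [e1]
  calc _ ≤ _ := norm_add_le _ _
    _ ≤ ‖c‖ * ‖(T ^ (N + 1)) (pw m u) - c⁻¹ • w‖ + B * ‖(T ^ (N + 1)) (pw (m + 1) u)‖ := by
      rw [norm_smul]
      gcongr
    _ < ‖c‖ * (ε / (‖c‖ + B)) + B * (ε / (‖c‖ + B)) :=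
      add_lt_add_of_lt_of_le (by gcongr) (by gcongr)
    _ = ε := by field_simp

end Final

/-- Proposition 1.3 / Proposition 2.10 of the paper, case `X = ℓᵖ(ℕ)`:
for `w 1 (a) ⋯ w n (a) = exp (a n^α)`, common hypercyclic vectors and common hypercyclic
algebras (coordinatewise product) exist simultaneously. -/
theorem stmt_9 (d : ℕ) (hd : 1 ≤ d) (α : ℝ) (hα0 : 0 < α) (hα1 : α ≤ 1)
    (p : ℝ≥0∞) [Fact (1 ≤ p)] (hp : p ≠ ⊤)
    (Λ : Set (Fin d → ℝ)) (hΛpos : ∀ lam ∈ Λ, ∀ i, 0 < lam i) (hΛσ : IsSigmaCompact Λ)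
    (T : (Fin d → ℝ) → ((Fin d → lpC p) →L[ℂ] (Fin d → lpC p)))
    (hT : ∀ lam ∈ Λ, IsProductShift p d (wExp α) (T lam) lam) :
    (∃ x : Fin d → lpC p, ∀ lam ∈ Λ,
        Dense (Set.range fun n : ℕ => ((T lam) ^ (n + 1)) x)) ↔
      CommonHypercyclicAlgebraCW p d Λ T := by
  constructor
  · rintro ⟨x, hx⟩
    obtain ⟨u, hu0, hu⟩ := exists_gen hd hα0 hα1 hp hΛpos hΛσ hT x hx
    refine ⟨{x | ∃ P : Polynomial ℂ, ∀ i n, x i n = u i n * P.eval (u i n)}, ?_, ?_, ?_, ?_, ?_, ?_⟩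
    · exact ⟨0, fun i n => by simp⟩
    · rintro x ⟨P, hP⟩ y ⟨Q, hQ⟩
      refine ⟨P + Q, fun i n => ?_⟩
      change x i n + y i n = _
      rw [hP, hQ, Polynomial.eval_add]
      ring
    · rintro c x ⟨P, hP⟩
      refine ⟨Polynomial.C c * P, fun i n => ?_⟩
      change c * x i n = _
      rw [hP, Polynomial.eval_mul, Polynomial.eval_C]
      ring
    · rintro x ⟨P, hP⟩ y ⟨Q, hQ⟩
      refine ⟨fun i => mulLp (x i) (y i), ⟨Polynomial.X * P * Q, fun i n => ?_⟩, fun i n => rfl⟩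
      rw [mulLp_apply, hP, hQ]
      simp only [Polynomial.eval_mul, Polynomial.eval_X]
      ring
    · exact ⟨u, ⟨1, fun i n => by simp⟩, hu0⟩
    · rintro y ⟨P, hP⟩ hy lam hl
      exact poly_dense (hT lam hl) u (hu lam hl) y hy P hP
  · rintro ⟨A, -, -, -, -, ⟨x, hxA, hx0⟩, hA⟩
    exact ⟨x, hA x hxA hx0⟩
end
end

section
/- Let d ≥ 1 be an integer, α ∈ (0,1], and for a > 0 let w(a) be the positive weight sequence determined by w_1(a)⋯w_n(a) = exp(a·n^α) for all n ≥ 1 (that is, w_n(a) = exp(a(n^α − (n−1)^α))). Let Λ ⊂ (0,∞)^d be σ-compact. Then the following are equivalent: (a) the family (B_{w(λ(1))} × ⋯ × B_{w(λ(d))})_{λ∈Λ} has a common hypercyclic vector in c₀(ℕ)^d; (b) the family (B_{w(λ(1))} × ⋯ × B_{w(λ(d))})_{λ∈Λ} has a common hypercyclic algebra in c₀(ℕ)^d for the coordinatewise product. -/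
open scoped ENNReal ZeroAtInfty
open Finset

noncomputable section

/-- The space `c₀(ℕ)` of complex sequences vanishing at infinity, with the sup norm. -/
abbrev c0C : Type := C₀(ℕ, ℂ)

/-- `T` is the product operator `B_{w(lam 0)} × ⋯ × B_{w(lam (d-1))}` of weighted backward
shifts, the weight sequence of the `i`-th factor being `(w (lam i) n)_{n ≥ 1}`. -/
def IsProductShiftC0 (d : ℕ) (w : ℝ → ℕ → ℝ)
    (T : (Fin d → c0C) →L[ℂ] (Fin d → c0C)) (lam : Fin d → ℝ) : Prop :=
  ∀ (v : Fin d → c0C) (i : Fin d) (n : ℕ),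
    (T v) i n = (w (lam i) (n + 1) : ℂ) * v i (n + 1)

/-- The family `T lam`, `lam ∈ S`, admits a common hypercyclic algebra for the coordinatewise
product: there is a non-unital subalgebra `A ≠ {0}` of `(c₀(ℕ))^d` (closed under addition,
scalar multiplication and the componentwise coordinatewise product) every nonzero element of
which is a common hypercyclic vector for the family. -/
def CommonHypercyclicAlgebraCWC0 (d : ℕ) (S : Set (Fin d → ℝ))
    (T : (Fin d → ℝ) → ((Fin d → c0C) →L[ℂ] (Fin d → c0C))) : Prop :=
  ∃ A : Set (Fin d → c0C),
    (0 : Fin d → c0C) ∈ A ∧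
    (∀ x ∈ A, ∀ y ∈ A, x + y ∈ A) ∧
    (∀ (c : ℂ), ∀ x ∈ A, c • x ∈ A) ∧
    (∀ x ∈ A, ∀ y ∈ A, ∃ z ∈ A, ∀ (i : Fin d) (n : ℕ), z i n = x i n * y i n) ∧
    (∃ x ∈ A, x ≠ 0) ∧
    (∀ x ∈ A, x ≠ 0 → ∀ lam ∈ S, Dense (Set.range fun n : ℕ => ((T lam) ^ (n + 1)) x))

open Filter Topology

/-- Exponent appearing in the iterates of the shift. -/
def bb (α : ℝ) (N n : ℕ) : ℝ := ((n + N : ℕ) : ℝ) ^ α - (n : ℝ) ^ α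

/-- Pointwise form of hypercyclicity (with arbitrarily large iterates). -/
def HCv (d : ℕ) (α : ℝ) (lam : Fin d → ℝ) (x : Fin d → c0C) : Prop :=
  ∀ (z : Fin d → c0C) (ε : ℝ), 0 < ε → ∀ M : ℕ, ∃ N ≥ M, ∀ i n,
    ‖((Real.exp (lam i * bb α N n) : ℝ) : ℂ) * x i (n + N) - z i n‖ < ε

lemma bb_nonneg {α : ℝ} (h0 : 0 < α) (N n : ℕ) : 0 ≤ bb α N n := by
  unfold bb
  have : (n : ℝ) ^ α ≤ ((n + N : ℕ) : ℝ) ^ α :=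
    Real.rpow_le_rpow (by positivity) (by push_cast; linarith [Nat.cast_nonneg (α := ℝ) N]) h0.le
  linarith

lemma bb_le {α : ℝ} (h0 : 0 < α) (h1 : α ≤ 1) (N n : ℕ) : bb α N n ≤ (N : ℝ) ^ α := by
  unfold bb
  have := Real.rpow_add_le_add_rpow (Nat.cast_nonneg (α := ℝ) n) (Nat.cast_nonneg (α := ℝ) N)
    h0.le h1
  push_cast
  linarith

lemma c0_norm_le (x : c0C) (n : ℕ) : ‖x n‖ ≤ ‖x‖ := by
  rw [← ZeroAtInftyContinuousMap.norm_toBCF_eq_norm]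
  exact x.toBCF.norm_coe_le_norm n

lemma c0_norm_le_of {x : c0C} {C : ℝ} (hC : 0 ≤ C) (h : ∀ n, ‖x n‖ ≤ C) : ‖x‖ ≤ C := by
  rw [← ZeroAtInftyContinuousMap.norm_toBCF_eq_norm]
  exact (BoundedContinuousFunction.norm_le hC).2 h

lemma pi_norm_le' {d : ℕ} (x : Fin d → c0C) (i : Fin d) (n : ℕ) : ‖x i n‖ ≤ ‖x‖ :=
  (c0_norm_le _ n).trans (norm_le_pi_norm x i)

lemma c0_tendsto (x : c0C) : Tendsto (fun n => x n) atTop (𝓝 0) := by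
  have := x.zero_at_infty'
  rw [cocompact_eq_cofinite, Nat.cofinite_eq_atTop] at this
  exact this

/-- Build an element of `c₀` from a null sequence. -/
def mkc0 (f : ℕ → ℂ) (h : Tendsto f atTop (𝓝 0)) : c0C where
  toFun := f
  continuous_toFun := continuous_of_discreteTopology
  zero_at_infty' := by rw [cocompact_eq_cofinite, Nat.cofinite_eq_atTop]; exact h

lemma mkc0_apply (f : ℕ → ℂ) (h : Tendsto f atTop (𝓝 0)) (n : ℕ) : mkc0 f h n = f n := rfl

lemma unif_small {X Y : Type*} [TopologicalSpace X] [TopologicalSpace Y] {K : Set Y}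
    (hK : IsCompact K) (x₀ : X) (G : X × Y → ℂ) (hG : Continuous G)
    (h0 : ∀ y ∈ K, G (x₀, y) = 0) {ε : ℝ} (hε : 0 < ε) :
    ∀ᶠ x in 𝓝 x₀, ∀ y ∈ K, ‖G (x, y)‖ < ε := by
  refine hK.eventually_forall_of_forall_eventually (P := fun x y => ‖G (x, y)‖ < ε) ?_
  intro y hy
  have hc : Continuous fun z : X × Y => ‖G (z.1, z.2)‖ := by fun_prop
  exact hc.continuousAt.eventually_lt_const (by simpa [h0 y hy] using hε)

lemma pow_formula {d : ℕ} {α : ℝ} {lam : Fin d → ℝ}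
    {T : (Fin d → c0C) →L[ℂ] (Fin d → c0C)} (hT : IsProductShiftC0 d (wExp α) T lam) (N : ℕ) :
    ∀ v i n, ((T ^ N) v) i n = ((Real.exp (lam i * bb α N n) : ℝ) : ℂ) * v i (n + N) := by
  induction N with
  | zero => intro v i n; simp [bb]
  | succ N ih =>
    intro v i n
    have e : (T ^ (N + 1)) v = (T ^ N) (T v) := by rw [pow_succ]; rfl
    rw [e, ih, hT, ← mul_assoc, ← Complex.ofReal_mul]
    unfold wExp
    rw [← Real.exp_add, add_assoc n N 1]
    congr 3
    unfold bb
    have : (((n + (N + 1) : ℕ) : ℝ) - 1) = ((n + N : ℕ) : ℝ) := by push_cast; ring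
    rw [this]
    ring

lemma HCv_iff_dense {d : ℕ} (hd : 1 ≤ d) {α : ℝ} {lam : Fin d → ℝ}
    {T : (Fin d → c0C) →L[ℂ] (Fin d → c0C)} (hT : IsProductShiftC0 d (wExp α) T lam)
    (x : Fin d → c0C) :
    Dense (Set.range fun n : ℕ => (T ^ (n + 1)) x) ↔ HCv d α lam x := by
  constructor
  · intro h z ε hε M
    have : Nonempty (Fin d) := ⟨⟨0, hd⟩⟩
    have : Nontrivial c0C := by
      refine ⟨⟨0, mkc0 (fun n => if n = 0 then 1 else 0) ?_, ?_⟩⟩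
      · refine tendsto_const_nhds.congr' ?_
        filter_upwards [eventually_gt_atTop 0] with n hn
        rw [if_neg (by omega)]
      · intro h
        have := DFunLike.congr_fun h 0
        simp [mkc0_apply] at this
    have : ∀ y : Fin d → c0C, (𝓝[≠] y).NeBot := fun y =>
      Module.punctured_nhds_neBot ℂ (Fin d → c0C) y
    have hfin : Set.Finite ((fun n : ℕ => (T ^ (n + 1)) x) '' Set.Iio M) :=
      (Set.finite_Iio M).image _
    have hD := h.sdiff_finite hfin
    obtain ⟨y, ⟨⟨N, rfl⟩, hN⟩, hy⟩ := Metric.dense_iff.1 hD z ε hε |>.imp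
      (fun y hy => And.intro hy.2 hy.1)
    have hNM : M ≤ N := by
      by_contra hlt
      exact hN ⟨N, not_le.1 hlt, rfl⟩
    refine ⟨N + 1, by omega, fun i n => ?_⟩
    rw [← pow_formula hT]
    have h1 := pi_norm_le' ((T ^ (N + 1)) x - z) i n
    rw [Metric.mem_ball, dist_eq_norm] at hy
    exact lt_of_le_of_lt h1 hy
  · intro h
    rw [Metric.dense_iff]
    intro z r hr
    obtain ⟨N, hN, hb⟩ := h z (r / 2) (by positivity) 1
    obtain ⟨N, rfl⟩ : ∃ k, N = k + 1 := ⟨N - 1, by omega⟩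
    refine ⟨_, ?_, ⟨N, rfl⟩⟩
    rw [Metric.mem_ball, dist_eq_norm]
    refine lt_of_le_of_lt ?_ (half_lt_self hr)
    rw [pi_norm_le_iff_of_nonneg (by positivity)]
    intro i
    refine c0_norm_le_of (by positivity) fun n => ?_
    have := hb i n
    rw [← pow_formula hT] at this
    exact this.le

/-- The homogeneous homeomorphism `r e^{iθ} ↦ r^{1/(m+1)} e^{iθ}`. -/
def phi (m : ℕ) (w : ℂ) : ℂ := ((‖w‖ ^ (1 / ((m : ℝ) + 1) - 1) : ℝ) : ℂ) * w

lemma phi_norm (m : ℕ) (w : ℂ) : ‖phi m w‖ = ‖w‖ ^ (1 / ((m : ℝ) + 1)) := by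
  unfold phi
  rcases eq_or_ne w 0 with rfl | hw
  · rw [mul_zero, norm_zero, Real.zero_rpow (by positivity)]
  · have hp : 0 < ‖w‖ := norm_pos_iff.2 hw
    rw [norm_mul, Complex.norm_real, Real.norm_of_nonneg (by positivity)]
    rw [Real.rpow_sub_one hp.ne']
    field_simp

lemma phi_zero (m : ℕ) : phi m 0 = 0 := by simp [phi]

lemma phi_cont (m : ℕ) : Continuous (phi m) := by
  rw [continuous_iff_continuousAt]
  intro w
  rcases eq_or_ne w 0 with rfl | hw
  · rw [ContinuousAt, phi_zero, tendsto_zero_iff_norm_tendsto_zero]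
    simp_rw [phi_norm]
    have hc : Continuous fun w : ℂ => ‖w‖ ^ (1 / ((m : ℝ) + 1)) :=
      continuous_norm.rpow_const (fun _ => Or.inr (by positivity))
    have := hc.tendsto 0
    rwa [norm_zero, Real.zero_rpow (by positivity)] at this
  · unfold phi
    have h1 : ContinuousAt (fun w : ℂ => ‖w‖ ^ (1 / ((m : ℝ) + 1) - 1)) w :=
      continuous_norm.continuousAt.rpow_const (Or.inl (norm_ne_zero_iff.2 hw))
    exact (Complex.continuous_ofReal.continuousAt.comp h1).mul continuousAt_id

lemma phi_hom (m : ℕ) (a : ℝ) (w : ℂ) :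
    phi m ((Real.exp a : ℝ) * w) = (Real.exp (1 / ((m : ℝ) + 1) * a) : ℝ) * phi m w := by
  unfold phi
  rw [norm_mul, Complex.norm_real, Real.norm_of_nonneg (Real.exp_pos a).le,
    Real.mul_rpow (Real.exp_pos a).le (norm_nonneg _), ← Real.exp_mul]
  have : Real.exp (1 / ((m : ℝ) + 1) * a)
      = Real.exp (a * (1 / ((m : ℝ) + 1) - 1)) * Real.exp a := by
    rw [← Real.exp_add]; ring_nf
  rw [this]
  push_cast
  ring

/-- Inverse of `phi`. -/
def psi (m : ℕ) (w : ℂ) : ℂ := ((‖w‖ ^ m : ℝ) : ℂ) * w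

lemma phi_psi (m : ℕ) (w : ℂ) : phi m (psi m w) = w := by
  unfold phi psi
  rcases eq_or_ne w 0 with rfl | hw
  · simp
  · have hp : 0 < ‖w‖ := norm_pos_iff.2 hw
    rw [norm_mul, Complex.norm_real, Real.norm_of_nonneg (by positivity), ← pow_succ,
      ← mul_assoc, ← Complex.ofReal_mul, ← Real.rpow_natCast, ← Real.rpow_natCast,
      ← Real.rpow_mul hp.le, ← Real.rpow_add hp]
    have : ((m + 1 : ℕ) : ℝ) * (1 / ((m : ℝ) + 1) - 1) + m = 0 := by
      push_cast; field_simp; ring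
    rw [this]; simp

lemma HCv_phi {d : ℕ} {α : ℝ} {lam : Fin d → ℝ} {x : Fin d → c0C} (m : ℕ)
    (h : HCv d α lam x) : HCv d α ((1 / ((m : ℝ) + 1)) • lam) (fun i => mkc0 (fun n => phi m (x i n))
      (phi_zero m ▸ ((phi_cont m).tendsto 0).comp (c0_tendsto (x i)))) := by
  intro z ε hε M
  have hpsi : Continuous (psi m) := by unfold psi; fun_prop
  let z' : Fin d → c0C := fun i => mkc0 (fun n => psi m (z i n)) (by
    have := (hpsi.tendsto 0).comp (c0_tendsto (z i))
    have h0 : psi m 0 = 0 := by simp [psi]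
    rw [h0] at this
    exact this)
  have hphi := phi_cont m
  have hev := unif_small (isCompact_closedBall (0 : ℂ) ‖z'‖) (0 : ℂ)
    (fun p => phi m (p.2 + p.1) - phi m p.2) (by fun_prop) (by simp) hε
  obtain ⟨δ, hδ, hball⟩ := Metric.eventually_nhds_iff.1 hev
  obtain ⟨N, hN, hb⟩ := h z' δ hδ M
  refine ⟨N, hN, fun i n => ?_⟩
  have h1 := hball (y := ((Real.exp (lam i * bb α N n) : ℝ) : ℂ) * x i (n + N) - z' i n)
    (by rw [dist_zero_right]; exact hb i n) (z' i n)
    (by rw [mem_closedBall_zero_iff]; exact pi_norm_le' z' i n)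
  have h2 : phi m (z' i n) = z i n := phi_psi m _
  rw [add_sub_cancel, phi_hom, h2] at h1
  rw [mkc0_apply, Pi.smul_apply, smul_eq_mul, mul_assoc]
  exact h1

/-- truncation -/
def trunc (x : c0C) (k : ℕ) : c0C := mkc0 (fun n => if n < k then x n else 0) (by
  refine tendsto_const_nhds.congr' ?_
  filter_upwards [eventually_ge_atTop k] with n hn
  rw [if_neg (by omega)])

lemma trunc_close (x : c0C) {ε : ℝ} (hε : 0 < ε) : ∃ k, ‖trunc x k - x‖ ≤ ε := by
  have := (c0_tendsto x).norm
  rw [norm_zero] at this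
  obtain ⟨k, hk⟩ := eventually_atTop.1 (this.eventually_lt_const hε)
  refine ⟨k, c0_norm_le_of hε.le fun n => ?_⟩
  change ‖(if n < k then x n else 0) - x n‖ ≤ ε
  split_ifs with h
  · simpa using hε.le
  · simpa using (hk n (not_lt.1 h)).le

/-- Linear-combination map used for separability. -/
def finMap (k : ℕ) (a : Fin k → ℂ) : c0C :=
  mkc0 (fun n => if h : n < k then a ⟨n, h⟩ else 0) (by
  refine tendsto_const_nhds.congr' ?_
  filter_upwards [eventually_ge_atTop k] with n hn
  rw [dif_neg (by omega)])

lemma finMap_cont (k : ℕ) : Continuous (finMap k) := by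
  refine (LipschitzWith.of_dist_le_mul (K := 1) fun a b => ?_).continuous
  rw [dist_eq_norm, dist_eq_norm, NNReal.coe_one, one_mul]
  refine c0_norm_le_of (norm_nonneg _) fun n => ?_
  change ‖(if h : n < k then a ⟨n, h⟩ else 0) - (if h : n < k then b ⟨n, h⟩ else 0)‖ ≤ _
  split_ifs with h
  · exact norm_le_pi_norm (a - b) ⟨n, h⟩
  · simp

lemma c0_separable : TopologicalSpace.SeparableSpace c0C := by
  rw [← TopologicalSpace.isSeparable_univ_iff]
  have h1 : TopologicalSpace.IsSeparable (⋃ k, Set.range (finMap k)) :=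
    TopologicalSpace.IsSeparable.iUnion fun k =>
      TopologicalSpace.isSeparable_range (finMap_cont k)
  refine h1.closure.mono fun x _ => ?_
  rw [Metric.mem_closure_iff]
  intro ε hε
  obtain ⟨k, hk⟩ := trunc_close x (half_pos hε)
  refine ⟨trunc x k, Set.mem_iUnion.2 ⟨k, fun j => x j, ?_⟩, ?_⟩
  · ext n
    change (if h : n < k then x n else 0) = if n < k then x n else 0
    split_ifs <;> rfl
  · rw [dist_comm, dist_eq_norm]
    linarith

lemma HCv_add {d : ℕ} {α : ℝ} {lam : Fin d → ℝ} {x : Fin d → c0C} (h : HCv d α lam x)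
    (u : Fin d → c0C) (k : ℕ) (hu : ∀ i n, k ≤ n → u i n = 0) : HCv d α lam (x + u) := by
  intro z ε hε M
  obtain ⟨N, hN, hb⟩ := h z ε hε (max M k)
  refine ⟨N, le_trans (le_max_left _ _) hN, fun i n => ?_⟩
  have : (x + u) i (n + N) = x i (n + N) := by
    change x i (n + N) + u i (n + N) = _
    rw [hu i _ (le_trans (le_trans (le_max_right _ _) hN) (by omega)), add_zero]
  rw [this]
  exact hb i n

lemma dense_HCv {d : ℕ} {α : ℝ} {L : Set (Fin d → ℝ)} {x : Fin d → c0C}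
    (h : ∀ lam ∈ L, HCv d α lam x) : Dense {y : Fin d → c0C | ∀ lam ∈ L, HCv d α lam y} := by
  rw [Metric.dense_iff]
  intro z r hr
  choose k hk using fun i => trunc_close (z i - x i) (half_pos hr)
  let u : Fin d → c0C := fun i => trunc (z i - x i) (k i)
  refine ⟨x + u, ?_, fun lam hl => HCv_add (h lam hl) u (∑ i, k i) ?_⟩
  · rw [Metric.mem_ball, dist_eq_norm]
    refine lt_of_le_of_lt ?_ (half_lt_self hr)
    rw [pi_norm_le_iff_of_nonneg (by positivity)]
    intro i
    have e : (x + u - z) i = trunc (z i - x i) (k i) - (z i - x i) := by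
      simp only [Pi.sub_apply, Pi.add_apply, u]; abel
    rw [e]
    exact hk i
  · intro i n hn
    change (if n < k i then _ else _) = _
    rw [if_neg]
    have : k i ≤ ∑ j, k j := Finset.single_le_sum (f := k) (fun _ _ => Nat.zero_le _) (mem_univ i)
    omega

lemma nhds_HCv {d : ℕ} {α : ℝ} (h0 : 0 < α) (h1 : α ≤ 1) {K : Set (Fin d → ℝ)}
    (hK : IsCompact K) {x : Fin d → c0C}
    (h : ∀ lam ∈ K, HCv d α lam x) (z : Fin d → c0C) {ε : ℝ} (hε : 0 < ε) (M : ℕ) :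
    ∀ᶠ y in 𝓝 x, ∀ lam ∈ K, ∃ N ≥ M, ∀ i n,
      ‖((Real.exp (lam i * bb α N n) : ℝ) : ℂ) * y i (n + N) - z i n‖ < ε := by
  refine hK.eventually_forall_of_forall_eventually
    (P := fun (y : Fin d → c0C) lam => ∃ N ≥ M, ∀ i n,
      ‖((Real.exp (lam i * bb α N n) : ℝ) : ℂ) * y i (n + N) - z i n‖ < ε) ?_
  intro lam hl
  obtain ⟨N, hN, hb⟩ := h lam hl z (ε / 2) (half_pos hε) M
  have key : ∀ i, ∀ᶠ p : ℝ × ℂ in 𝓝 (lam i, 0), ∀ q ∈ Set.Icc (0 : ℝ) ((N : ℝ) ^ α) ×ˢ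
      Metric.closedBall (0 : ℂ) ‖x‖, ‖((Real.exp (p.1 * q.1) : ℝ) : ℂ) * (q.2 + p.2)
        - ((Real.exp (lam i * q.1) : ℝ) : ℂ) * q.2‖ < ε / 2 := by
    intro i
    exact unif_small (isCompact_Icc.prod (isCompact_closedBall _ _)) (lam i, (0 : ℂ))
      (fun r : (ℝ × ℂ) × (ℝ × ℂ) => ((Real.exp (r.1.1 * r.2.1) : ℝ) : ℂ) * (r.2.2 + r.1.2)
        - ((Real.exp (lam i * r.2.1) : ℝ) : ℂ) * r.2.2) (by fun_prop) (by simp) (half_pos hε)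
  have key2 : ∀ i, ∃ δ > 0, ∀ (l : ℝ) (s : ℂ), |l - lam i| < δ → ‖s‖ < δ →
      ∀ q ∈ Set.Icc (0 : ℝ) ((N : ℝ) ^ α) ×ˢ
      Metric.closedBall (0 : ℂ) ‖x‖, ‖((Real.exp (l * q.1) : ℝ) : ℂ) * (q.2 + s)
        - ((Real.exp (lam i * q.1) : ℝ) : ℂ) * q.2‖ < ε / 2 := by
    intro i
    obtain ⟨δ, hδ, hh⟩ := Metric.eventually_nhds_iff.1 (key i)
    refine ⟨δ, hδ, fun l s hl hs => hh (y := (l, s)) ?_⟩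
    rw [Prod.dist_eq, max_lt_iff, Real.dist_eq, dist_zero_right]
    exact ⟨hl, hs⟩
  have key3 : ∀ᶠ p : (Fin d → c0C) × (Fin d → ℝ) in 𝓝 (x, lam), ∀ i n,
      ‖((Real.exp (p.2 i * bb α N n) : ℝ) : ℂ) * p.1 i (n + N) -
        ((Real.exp (lam i * bb α N n) : ℝ) : ℂ) * x i (n + N)‖ < ε / 2 := by
    rw [eventually_all]
    intro i
    obtain ⟨δ, hδ, hh⟩ := key2 i
    filter_upwards [Metric.ball_mem_nhds (x, lam) hδ] with p hp n
    rw [Metric.mem_ball, Prod.dist_eq, max_lt_iff] at hp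
    have := hh (p.2 i) (p.1 i (n + N) - x i (n + N))
      (lt_of_le_of_lt (dist_le_pi_dist p.2 lam i) hp.2)
      (lt_of_le_of_lt (pi_norm_le' (p.1 - x) i (n + N)) (by rw [← dist_eq_norm]; exact hp.1))
      (bb α N n, x i (n + N))
      ⟨⟨bb_nonneg h0 N n, bb_le h0 h1 N n⟩,
        by rw [mem_closedBall_zero_iff]; exact pi_norm_le' x i _⟩
    simpa using this
  filter_upwards [key3] with p hp
  refine ⟨N, hN, fun i n => ?_⟩
  have a1 := hp i n
  have a2 := hb i n
  have := norm_add_le (((Real.exp (p.2 i * bb α N n) : ℝ) : ℂ) * p.1 i (n + N) -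
        ((Real.exp (lam i * bb α N n) : ℝ) : ℂ) * x i (n + N))
        (((Real.exp (lam i * bb α N n) : ℝ) : ℂ) * x i (n + N) - z i n)
  rw [sub_add_sub_cancel] at this
  linarith

lemma exists_common {d : ℕ} {α : ℝ} (h0 : 0 < α) (h1 : α ≤ 1) {L : Set (Fin d → ℝ)}
    (hL : IsSigmaCompact L) {x : Fin d → c0C} (h : ∀ lam ∈ L, HCv d α lam x) :
    ∃ y : Fin d → c0C, ∀ m : ℕ, ∀ lam ∈ L, HCv d α ((1 / ((m : ℝ) + 1)) • lam) y := by
  obtain ⟨K, hK, rfl⟩ := hL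
  have := c0_separable
  let zs := TopologicalSpace.denseSeq (Fin d → c0C)
  let K' : ℕ → ℕ → Set (Fin d → ℝ) := fun m j => (fun lam => (1 / ((m : ℝ) + 1)) • lam) '' K j
  have hK' : ∀ m j, IsCompact (K' m j) := fun m j => (hK j).image (by fun_prop)
  let S : ℕ × ℕ × ℕ × ℕ → Set (Fin d → c0C) := fun p =>
    {y | ∀ lam ∈ K' p.1 p.2.1, ∃ N ≥ p.2.2.2, ∀ i n,
      ‖((Real.exp (lam i * bb α N n) : ℝ) : ℂ) * y i (n + N) - zs p.2.2.1 i n‖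
        < 1 / ((p.2.2.2 : ℝ) + 1)}
  have hdense : Dense (⋂ p, interior (S p)) := by
    refine dense_iInter_of_isOpen (fun p => isOpen_interior) fun p => ?_
    have hd := dense_HCv (L := K' p.1 p.2.1) (α := α) (d := d) (by
      rintro _ ⟨lam, hl, rfl⟩
      exact HCv_phi p.1 (h lam (Set.mem_iUnion.2 ⟨_, hl⟩)))
    refine hd.mono fun y hy => ?_
    rw [mem_interior_iff_mem_nhds]
    exact nhds_HCv h0 h1 (hK' _ _) hy (zs p.2.2.1) (by positivity) p.2.2.2
  obtain ⟨y, hy⟩ := hdense.nonempty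
  refine ⟨y, fun m lam hl z ε hε M => ?_⟩
  obtain ⟨j, hj⟩ := Set.mem_iUnion.1 hl
  obtain ⟨_, hz, k, rfl⟩ := Metric.dense_iff.1 (TopologicalSpace.denseRange_denseSeq
    (Fin d → c0C)) z (ε / 2) (half_pos hε)
  obtain ⟨l, hl1⟩ := exists_nat_one_div_lt (half_pos hε)
  have hmem := interior_subset (Set.mem_iInter.1 hy (m, j, k, max l M))
  obtain ⟨N, hN, hb⟩ := hmem _ ⟨lam, hj, rfl⟩
  refine ⟨N, le_trans (le_max_right _ _) hN, fun i n => ?_⟩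
  have a1 := hb i n
  have a2 : (1 : ℝ) / (((max l M : ℕ) : ℝ) + 1) ≤ 1 / ((l : ℝ) + 1) := by
    gcongr
    exact le_max_left _ _
  have a3 : ‖zs k i n - z i n‖ < ε / 2 := by
    refine lt_of_le_of_lt (pi_norm_le' (zs k - z) i n) ?_
    rw [← dist_eq_norm]; exact hz
  refine lt_of_le_of_lt (norm_sub_le_norm_sub_add_norm_sub _ (zs k i n) _) ?_
  dsimp only at a1
  linarith

lemma HCv_poly {d : ℕ} {α : ℝ} {lam : Fin d → ℝ} {x : Fin d → c0C}
    (h : ∀ m : ℕ, HCv d α ((1 / ((m : ℝ) + 1)) • lam) x) (P : Polynomial ℂ) (hP : P ≠ 0)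
    (hP0 : P.coeff 0 = 0) (y : Fin d → c0C) (hy : ∀ i n, y i n = P.eval (x i n)) :
    HCv d α lam y := by
  obtain ⟨Q, hQ, hQ0⟩ := P.exists_eq_pow_rootMultiplicity_mul_and_not_dvd hP 0
  rw [Polynomial.C_0, sub_zero] at hQ hQ0
  have hm : P.rootMultiplicity 0 ≠ 0 := by
    rw [← Nat.pos_iff_ne_zero, Polynomial.rootMultiplicity_pos hP, Polynomial.IsRoot,
      ← Polynomial.coeff_zero_eq_eval_zero, hP0]
  obtain ⟨m, hm⟩ := Nat.exists_eq_succ_of_ne_zero hm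
  rw [hm] at hQ
  have hc : Q.eval 0 ≠ 0 := by
    rwa [Polynomial.X_dvd_iff, Polynomial.coeff_zero_eq_eval_zero] at hQ0
  set c := Q.eval 0 with hcdef
  intro z ε hε M
  choose r hr using fun w : ℂ => IsAlgClosed.exists_pow_nat_eq w (Nat.succ_pos m)
  have hu : ∀ i, Tendsto (fun n => r (z i n / c)) atTop (𝓝 0) := by
    intro i
    have ht : Tendsto (fun n => r (z i n / c) ^ (m + 1)) atTop (𝓝 0) := by
      have : (fun n => r (z i n / c) ^ (m + 1)) = fun n => z i n / c := funext fun n => hr _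
      rw [this]
      simpa using (c0_tendsto (z i)).div_const c
    rw [Metric.tendsto_atTop] at ht ⊢
    intro e he
    obtain ⟨n0, hn0⟩ := ht (e ^ (m + 1)) (by positivity)
    refine ⟨n0, fun n hn => ?_⟩
    have := hn0 n hn
    rw [dist_zero_right, norm_pow] at this
    rw [dist_zero_right]
    exact lt_of_pow_lt_pow_left₀ _ he.le this
  let u : Fin d → c0C := fun i => mkc0 _ (hu i)
  have hucz : ∀ i n, u i n ^ (m + 1) * c = z i n := by
    intro i n
    change r (z i n / c) ^ (m + 1) * c = _
    rw [hr, div_mul_cancel₀ _ hc]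
  have hev := unif_small (isCompact_closedBall (0 : ℂ) ‖u‖) ((0 : ℂ), (0 : ℂ))
    (fun p : (ℂ × ℂ) × ℂ => (p.2 + p.1.1) ^ (m + 1) * Q.eval p.1.2 - p.2 ^ (m + 1) * c)
    (by have := Q.continuous; fun_prop) (by simp [hcdef]) hε
  obtain ⟨δ, hδ, hball⟩ := Metric.eventually_nhds_iff.1 hev
  have hsmall : ∀ᶠ n in atTop, ∀ i, ‖x i n‖ < δ := by
    rw [eventually_all]
    intro i
    have := (c0_tendsto (x i)).norm
    rw [norm_zero] at this
    exact this.eventually_lt_const hδ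
  obtain ⟨n1, hn1⟩ := eventually_atTop.1 hsmall
  obtain ⟨N, hN, hb⟩ := h m u δ hδ (max M n1)
  refine ⟨N, le_trans (le_max_left _ _) hN, fun i n => ?_⟩
  have h1 := hball (y := (((Real.exp (((1 / ((m : ℝ) + 1)) • lam) i * bb α N n) : ℝ) : ℂ)
      * x i (n + N) - u i n, x i (n + N)))
    (by
      rw [Prod.dist_eq, max_lt_iff, dist_zero_right, dist_zero_right]
      exact ⟨hb i n, hn1 _ (by have := le_max_right M n1; omega) i⟩) (u i n)
    (by rw [mem_closedBall_zero_iff]; exact pi_norm_le' u i n)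
  dsimp only at h1
  rw [add_sub_cancel, hucz, mul_pow, ← Complex.ofReal_pow, ← Real.exp_nat_mul] at h1
  rw [hy, hQ]
  have e : ((m + 1 : ℕ) : ℝ) * (((1 / ((m : ℝ) + 1)) • lam) i * bb α N n) = lam i * bb α N n := by
    rw [Pi.smul_apply, smul_eq_mul]; push_cast; field_simp
  rw [e, mul_assoc] at h1
  simpa using h1

/-- Proposition 1.3 / Proposition 2.10 of the paper, case `X = c₀(ℕ)`. -/
theorem stmt_10 (d : ℕ) (hd : 1 ≤ d) (α : ℝ) (hα0 : 0 < α) (hα1 : α ≤ 1)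
    (Λ : Set (Fin d → ℝ)) (hΛpos : ∀ lam ∈ Λ, ∀ i, 0 < lam i) (hΛσ : IsSigmaCompact Λ)
    (T : (Fin d → ℝ) → ((Fin d → c0C) →L[ℂ] (Fin d → c0C)))
    (hT : ∀ lam ∈ Λ, IsProductShiftC0 d (wExp α) (T lam) lam) :
    (∃ x : Fin d → c0C, ∀ lam ∈ Λ,
        Dense (Set.range fun n : ℕ => ((T lam) ^ (n + 1)) x)) ↔
      CommonHypercyclicAlgebraCWC0 d Λ T := by
  constructor
  · rintro ⟨x, hx⟩
    rcases Λ.eq_empty_or_nonempty with rfl | ⟨lam0, hl0⟩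
    · refine ⟨Set.univ, trivial, fun _ _ _ _ => trivial, fun _ _ _ => trivial,
        fun a _ b _ => ⟨a * b, trivial, fun _ _ => rfl⟩,
        ⟨fun _ => trunc (mkc0 (fun n => 1 / ((n : ℂ) + 1))
          tendsto_one_div_add_atTop_nhds_zero_nat) 1, trivial, ?_⟩, by simp⟩
      intro h
      have := DFunLike.congr_fun (congr_fun h ⟨0, hd⟩) 0
      change (if 0 < 1 then (1 / (((0 : ℕ) : ℂ) + 1)) else 0) = 0 at this
      simp at this
    · obtain ⟨y, hy⟩ := exists_common hα0 hα1 hΛσ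
        (fun lam hl => (HCv_iff_dense hd (hT lam hl) x).1 (hx lam hl))
      refine ⟨{v | ∃ P : Polynomial ℂ, P.coeff 0 = 0 ∧ ∀ i n, v i n = P.eval (y i n)},
        ⟨0, by simp, by simp⟩, ?_, ?_, ?_, ⟨y, ⟨Polynomial.X, by simp, by simp⟩, ?_⟩, ?_⟩
      · rintro a ⟨P, hP, ha⟩ b ⟨Q, hQ, hb⟩
        exact ⟨P + Q, by simp [hP, hQ], fun i n => by simp [ha, hb]⟩
      · rintro c a ⟨P, hP, ha⟩
        exact ⟨Polynomial.C c * P, by simp [hP], fun i n => by simp [ha]⟩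
      · rintro a ⟨P, hP, ha⟩ b ⟨Q, hQ, hb⟩
        exact ⟨a * b, ⟨P * Q, by simp [Polynomial.mul_coeff_zero, hP],
          fun i n => by simp [ha, hb]⟩, fun _ _ => rfl⟩
      · rintro rfl
        let z : Fin d → c0C := fun _ => trunc (mkc0 (fun n => 1 / ((n : ℂ) + 1))
          tendsto_one_div_add_atTop_nhds_zero_nat) 1
        obtain ⟨N, -, hN⟩ := hy 0 lam0 hl0 z 1 one_pos 0
        have := hN ⟨0, hd⟩ 0
        have hz : z ⟨0, hd⟩ 0 = 1 := by
          change (if 0 < 1 then (1 / (((0 : ℕ) : ℂ) + 1)) else 0) = 1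
          simp
        rw [hz] at this
        simp at this
      · rintro v ⟨P, hP, hv⟩ hv0 lam hl
        rw [HCv_iff_dense hd (hT lam hl)]
        refine HCv_poly (fun m => hy m lam hl) P ?_ hP v hv
        rintro rfl
        apply hv0
        ext i n
        simp [hv]
  · rintro ⟨A, -, -, -, -, ⟨x, hxA, hx0⟩, h⟩
    exact ⟨x, h x hxA hx0⟩
end
end

section
/- Let d ≥ 1 be an integer, p ∈ [1,∞), α ∈ (0, 1/d), and for λ > 0 let w(λ) be the positive weight sequence determined by w_1(λ)⋯w_n(λ) = exp(λ·n^α) for all n ≥ 1. Then the family (B_{w(λ₁)} × ⋯ × B_{w(λ_d)})_{λ∈(0,∞)^d} admits a common hypercyclic algebra on ℓp(ℕ)^d for the coordinatewise product. -/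
open scoped ENNReal
open Finset

noncomputable section

lemma exists_base (d : ℕ) (hd : 1 ≤ d) (α : ℝ) (hα1 : α < 1 / (d : ℝ)) :
    ∃ Q : ℕ, 1 ≤ Q ∧ ((2 * Q ^ d : ℕ) : ℝ) ^ α < Q := by
  have hd' : (0:ℝ) < d := by exact_mod_cast hd
  have h1 : 0 < 1 - α * d := by
    have := (lt_div_iff₀ hd').1 hα1
    linarith
  have ht : Filter.Tendsto (fun n : ℕ => (n : ℝ) ^ (1 - α * d)) Filter.atTop Filter.atTop :=
    (tendsto_rpow_atTop h1).comp tendsto_natCast_atTop_atTop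
  obtain ⟨Q, hQ, hQ1⟩ := ((ht.eventually_gt_atTop ((2:ℝ)^α)).and
    (Filter.eventually_ge_atTop 1)).exists
  refine ⟨Q, hQ1, ?_⟩
  have hQ0 : (0:ℝ) < Q := by exact_mod_cast hQ1
  push_cast
  rw [Real.mul_rpow (by norm_num) (by positivity), ← Real.rpow_natCast, ← Real.rpow_mul hQ0.le]
  rw [mul_comm (d:ℝ) α]
  calc (2:ℝ)^α * (Q:ℝ)^(α*d) < (Q:ℝ)^(1 - α*d) * (Q:ℝ)^(α*d) := by
        apply mul_lt_mul_of_pos_right hQ; positivity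
    _ = Q := by rw [← Real.rpow_add hQ0]; simp

lemma exp_decay (α c : ℝ) (hα : 0 < α) (hc : 0 < c) :
    ∃ C : ℝ, 0 < C ∧ ∀ q : ℕ, 1 ≤ q → Real.exp (-(c * (q:ℝ) ^ α)) ≤ C / (q:ℝ) ^ 2 := by
  obtain ⟨n, hn⟩ := exists_nat_gt (2 / α)
  refine ⟨n.factorial / c ^ n, by positivity, fun q hq => ?_⟩
  have hq1 : (1:ℝ) ≤ q := by exact_mod_cast hq
  have hq0 : (0:ℝ) < q := by linarith
  have h := Real.pow_div_factorial_le_exp (c * (q:ℝ)^α) (by positivity) n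
  have h2 : (q:ℝ)^2 ≤ ((q:ℝ)^α)^n := by
    rw [← Real.rpow_natCast _ n, ← Real.rpow_mul hq0.le, ← Real.rpow_natCast _ 2]
    apply Real.rpow_le_rpow_of_exponent_le hq1
    have := (div_lt_iff₀ hα).1 hn
    push_cast; linarith
  rw [Real.exp_neg, mul_pow] at *
  rw [le_div_iff₀ (by positivity), inv_mul_le_iff₀ (Real.exp_pos _)]
  have hf : (0:ℝ) < n.factorial := by positivity
  rw [div_le_iff₀ hf] at h
  rw [mul_div_assoc', le_div_iff₀ (by positivity)]
  calc (q:ℝ)^2 * c^n ≤ ((q:ℝ)^α)^n * c^n := by gcongr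
    _ = c^n * ((q:ℝ)^α)^n := by ring
    _ ≤ _ := h

lemma sum_sq_tail (C : ℝ) (hC : 0 ≤ C) (N : ℕ) (hN : 1 ≤ N) (L : ℕ) :
    ∑ q ∈ range L, (if N ≤ q then C / (q:ℝ)^2 else 0) ≤ 2 * C / N := by
  rw [← Finset.sum_filter]
  have h := sum_Ioo_inv_sq_le (α := ℝ) (N-1) L
  have e : (range L).filter (fun q => N ≤ q) = Ioo (N-1) L := by
    ext q; simp; omega
  rw [e]
  have : ((N-1 : ℕ):ℝ) + 1 = N := by
    rw [Nat.cast_sub hN]; simp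
  rw [this] at h
  calc ∑ q ∈ Ioo (N-1) L, C / (q:ℝ)^2 = C * ∑ q ∈ Ioo (N-1) L, ((q:ℝ)^2)⁻¹ := by
        rw [mul_sum]; rfl
    _ ≤ C * (2 / N) := by gcongr
    _ = _ := by ring

lemma cube_curve (d : ℕ) (α : ℝ) (hα0 : 0 < α) (Q b : ℕ) (hQ : 1 ≤ Q) (hb : b = 2 * Q ^ d)
    (hbQ : (b:ℝ) ^ α ≤ Q) (k : ℕ) :
    ∃ (S : Set ℕ) (x : ℕ → Fin d → ℝ), (∀ t ∈ S, t < b ^ k) ∧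
      (∀ t ∈ S, ∀ i, 0 ≤ x t i ∧ x t i ≤ 1) ∧
      (∀ y : Fin d → ℝ, (∀ i, 0 ≤ y i ∧ y i ≤ 1) →
        ∃ t ∈ S, ∀ i, |y i - x t i| ≤ (1 / (Q:ℝ)) ^ k) ∧
      (∀ t ∈ S, ∀ t' ∈ S, t < t' → ∀ i,
        |x t i - x t' i| ≤ (b:ℝ) ^ α * (((t':ℝ) - t) / (b:ℝ) ^ k) ^ α) := by
  have hQ0 : (0:ℝ) < Q := by exact_mod_cast hQ
  have hb0 : 0 < b := by rw [hb]; positivity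
  have hb0' : (0:ℝ) < b := by exact_mod_cast hb0
  induction k with
  | zero =>
    refine ⟨{0}, fun _ _ => 0, ?_, ?_, ?_, ?_⟩
    · simp
    · simp
    · intro y hy
      refine ⟨0, rfl, fun i => ?_⟩
      rw [abs_le]; simp
      constructor <;> linarith [(hy i).1, (hy i).2]
    · intro t ht t' ht' h
      simp at ht ht'; omega
  | succ k ih =>
    obtain ⟨S, x, h1, h2, h3, h4⟩ := ih
    have e : Nonempty ((Fin d → Fin Q) ≃ Fin (Q ^ d)) := by
      apply Fintype.card_eq.1; simp
    obtain ⟨e⟩ := e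
    have hbk : 0 < b ^ k := by positivity
    have hbk' : (0:ℝ) < (b:ℝ) ^ k := by positivity
    let dig : ℕ → Fin d → ℕ := fun c i => if h : c < Q ^ d then (e.symm ⟨c, h⟩ i : ℕ) else 0
    have hdig : ∀ c i, dig c i + 1 ≤ Q := by
      intro c i
      simp only [dig]
      split_ifs with h
      · exact (e.symm ⟨c, h⟩ i).2
      · omega
    let S' : Set ℕ := {T | ∃ c t, c < Q ^ d ∧ t ∈ S ∧ T = 2 * c * b ^ k + t}
    let x' : ℕ → Fin d → ℝ := fun T i => ((dig (T / b ^ k / 2) i : ℝ) + x (T % b ^ k) i) / Q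
    have hx' : ∀ c t, t ∈ S → ∀ i, x' (2 * c * b ^ k + t) i = ((dig c i : ℝ) + x t i) / Q := by
      intro c t ht i
      have ht' := h1 t ht
      have e1 : (2 * c * b ^ k + t) / b ^ k = 2 * c := by
        rw [mul_comm, Nat.mul_add_div hbk, Nat.div_eq_of_lt ht']; simp
      have e2 : (2 * c * b ^ k + t) % b ^ k = t := by
        rw [Nat.mul_add_mod_self_right, Nat.mod_eq_of_lt ht']
      simp only [x', e1, e2]
      rw [Nat.mul_div_cancel_left _ (by norm_num)]
    have hrange : ∀ c t, t ∈ S → ∀ i, 0 ≤ ((dig c i : ℝ) + x t i) / Q ∧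
        ((dig c i : ℝ) + x t i) / Q ≤ 1 := by
      intro c t ht i
      have := h2 t ht i
      have h5 : (dig c i : ℝ) + 1 ≤ Q := by exact_mod_cast hdig c i
      constructor
      · apply div_nonneg _ hQ0.le
        linarith [this.1, (Nat.cast_nonneg (dig c i) : (0:ℝ) ≤ _)]
      · rw [div_le_one hQ0]; linarith [this.2]
    refine ⟨S', x', ?_, ?_, ?_, ?_⟩
    · rintro T ⟨c, t, hc, ht, rfl⟩
      have := h1 t ht
      calc 2 * c * b ^ k + t < (2 * c + 1) * b ^ k := by linarith
        _ ≤ b * b ^ k := by apply Nat.mul_le_mul_right; omega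
        _ = b ^ (k+1) := by ring
    · rintro T ⟨c, t, hc, ht, rfl⟩ i
      rw [hx' c t ht]
      exact hrange c t ht i
    · intro y hy
      let σ : Fin d → Fin Q := fun i => ⟨min ⌊(Q:ℝ) * y i⌋₊ (Q - 1), by
        have := min_le_right ⌊(Q:ℝ) * y i⌋₊ (Q - 1); omega⟩
      have hσ : ∀ i, 0 ≤ (Q:ℝ) * y i - (σ i : ℕ) ∧ (Q:ℝ) * y i - (σ i : ℕ) ≤ 1 := by
        intro i
        have hy0 : 0 ≤ (Q:ℝ) * y i := mul_nonneg hQ0.le (hy i).1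
        have f1 := Nat.floor_le hy0
        have f2 := Nat.lt_floor_add_one ((Q:ℝ) * y i)
        have hyQ : (Q:ℝ) * y i ≤ Q := by nlinarith [(hy i).2]
        simp only [σ]
        rcases le_total ⌊(Q:ℝ) * y i⌋₊ (Q - 1) with h | h
        · rw [min_eq_left h]; constructor <;> linarith
        · rw [min_eq_right h]
          have h' : ((Q - 1 : ℕ) : ℝ) ≤ (⌊(Q:ℝ) * y i⌋₊ : ℝ) := by exact_mod_cast h
          rw [Nat.cast_sub hQ] at *
          push_cast at *
          constructor <;> linarith
      obtain ⟨t, ht, hty⟩ := h3 (fun i => (Q:ℝ) * y i - (σ i : ℕ)) hσ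
      refine ⟨2 * (e σ : ℕ) * b ^ k + t, ⟨e σ, t, (e σ).2, ht, rfl⟩, fun i => ?_⟩
      rw [hx' _ t ht]
      have : dig (e σ : ℕ) i = (σ i : ℕ) := by
        simp [dig]
      rw [this]
      have h5 : y i - (((σ i : ℕ) : ℝ) + x t i) / Q = ((Q:ℝ) * y i - (σ i : ℕ) - x t i) * (1 / Q) := by
        field_simp; ring
      rw [h5, abs_mul, pow_succ, abs_of_pos (by positivity : (0:ℝ) < 1 / Q)]
      gcongr
      exact hty i
    · rintro T ⟨c, t, hc, ht, rfl⟩ T' ⟨c', t', hc', ht', rfl⟩ hlt i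
      rw [hx' c t ht, hx' c' t' ht']
      have g1 := h1 t ht
      have g2 := h1 t' ht'
      rcases lt_trichotomy c c' with h | h | h
      · have hgap : (b:ℝ)^k ≤ ((2 * c' * b ^ k + t' : ℕ) : ℝ) - ((2 * c * b ^ k + t : ℕ) : ℝ) := by
          have : (2 * c * b ^ k + t) + b ^ k ≤ 2 * c' * b ^ k + t' := by nlinarith
          have : (((2 * c * b ^ k + t) + b ^ k : ℕ) : ℝ) ≤ ((2 * c' * b ^ k + t' : ℕ) : ℝ) := by
            exact_mod_cast this
          push_cast at this ⊢
          linarith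
        calc |((dig c i : ℝ) + x t i) / Q - ((dig c' i : ℝ) + x t' i) / Q| ≤ 1 := by
              have r1 := hrange c t ht i
              have r2 := hrange c' t' ht' i
              rw [abs_le]; constructor <;> linarith [r1.1, r1.2, r2.1, r2.2]
          _ = (b:ℝ)^α * ((b:ℝ)^k / (b:ℝ)^(k+1)) ^ α := by
              rw [← Real.mul_rpow hb0'.le (by positivity)]
              have : (b:ℝ) * ((b:ℝ)^k / (b:ℝ)^(k+1)) = 1 := by field_simp; ring
              rw [this, Real.one_rpow]
          _ ≤ _ := by gcongr
      · subst h
        have htt : t < t' := by omega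
        have h6 := h4 t ht t' ht' htt i
        have htt' : (0:ℝ) ≤ (t':ℝ) - t := by
          have : (t:ℝ) ≤ t' := by exact_mod_cast htt.le
          linarith
        have e1 : ((2 * c * b ^ k + t' : ℕ) : ℝ) - ((2 * c * b ^ k + t : ℕ) : ℝ) = (t':ℝ) - t := by
          push_cast; ring
        have e2 : ((dig c i : ℝ) + x t i) / Q - ((dig c i : ℝ) + x t' i) / Q
            = (x t i - x t' i) / Q := by ring
        rw [e1, e2, abs_div, abs_of_pos hQ0, div_le_iff₀ hQ0]
        refine h6.trans ?_
        have e3 : ((t':ℝ) - t) / (b:ℝ)^k = b * (((t':ℝ) - t) / (b:ℝ)^(k+1)) := by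
          field_simp; ring
        rw [e3, Real.mul_rpow hb0'.le (by positivity), mul_assoc]
        gcongr (b:ℝ)^α * ?_
        rw [mul_comm]
        gcongr
      · exfalso
        nlinarith

lemma exists_root (m : ℕ) (hm : 1 ≤ m) : ∃ ρ : ℂ → ℂ, ∀ z, ρ z ^ m = z :=
  ⟨fun z => z ^ ((m:ℂ)⁻¹), fun z => Complex.cpow_nat_inv_pow z (by omega)⟩

set_option maxHeartbeats 2000000 in
lemma stage (d : ℕ) (hd : 1 ≤ d) (α : ℝ) (hα0 : 0 < α) (hα1 : α < 1 / (d : ℝ)) :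
    ∃ C0 : ℕ, 1 ≤ C0 ∧ ∀ (m : ℕ) (_ : 1 ≤ m) (K : ℕ) (v : Fin d → ℕ → ℂ)
      (_ : ∀ i k, K ≤ k → v i k = 0) (V : ℝ) (_ : 1 ≤ V) (_ : ∀ i k, ‖v i k‖ ≤ V)
      (η : ℝ) (_ : 0 < η) (a : Fin d → ℝ) (_ : ∀ i, C0 * η ≤ a i) (A : ℝ) (_ : ∀ i, a i + η ≤ A)
      (ε : ℝ) (_ : 0 < ε) (M : ℕ),
      ∃ (u : Fin d → ℕ → ℂ) (L : ℕ), M < L ∧ (∀ i q, u i q ≠ 0 → M ≤ q ∧ q < L) ∧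
        (∀ i L', ∑ q ∈ range L', ‖u i q‖ ≤ ε) ∧
        ∀ lam : Fin d → ℝ, (∀ i, a i ≤ lam i ∧ lam i ≤ a i + η) →
          ∃ n, M ≤ n ∧ n < L ∧ ∀ i L', ∑ k ∈ range L',
            ‖(Real.exp (lam i * (((n + k : ℕ) : ℝ) ^ α - (k:ℝ) ^ α)) : ℂ) * u i (n + k) ^ m
              - v i k‖ ≤ ε := by
  classical
  obtain ⟨Q, hQ, hbQ⟩ := exists_base d hd α hα1
  set b : ℕ := 2 * Q ^ d with hb
  have hQ0 : (0:ℝ) < Q := by exact_mod_cast hQ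
  have hb0 : 0 < b := by rw [hb]; positivity
  have hb2 : 1 < b := by
    have : 0 < Q ^ d := by positivity
    omega
  have hb0' : (0:ℝ) < b := by exact_mod_cast hb0
  set D : ℝ := (b:ℝ) ^ α * 2 ^ α with hD
  have hD0 : 0 < D := by positivity
  obtain ⟨C0, hC0⟩ := exists_nat_gt (2 * D)
  have hC0' : 1 ≤ C0 := by
    have : (0:ℝ) < C0 := by linarith
    exact_mod_cast this
  refine ⟨C0, hC0', ?_⟩
  intro m hm K v hv V hV hvV η hη a ha A hA ε hε M
  obtain ⟨ρ, hρ⟩ := exists_root m hm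
  have hm0 : (0:ℝ) < m := by exact_mod_cast hm
  have hA0 : 0 < A := by
    have h1 := hA ⟨0, hd⟩
    have h2 := ha ⟨0, hd⟩
    have : 0 < C0 * η := by positivity
    linarith
  -- decay constants
  obtain ⟨C3, hC3, hdec⟩ := exp_decay α (D * η) hα0 (by positivity)
  obtain ⟨C4, hC4, hdec4⟩ := exp_decay α (D * η / m) hα0 (by positivity)
  set W : ℝ := V * Real.exp (A * (K:ℝ) ^ α) with hW
  have hexp1 : 1 ≤ Real.exp (A * (K:ℝ) ^ α) := Real.one_le_exp (by positivity)
  have hW1 : 1 ≤ W := by nlinarith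
  set C2 : ℝ := V * Real.exp (1 + A * (K:ℝ) ^ α) * C3 with hC2
  have hC20 : 0 < C2 := by positivity
  -- choice of R
  obtain ⟨R, hR⟩ := exists_nat_gt (max (K:ℝ) (4 * C2 / ε))
  have hRK : K ≤ R := by
    have := (le_max_left _ _).trans_lt hR
    exact_mod_cast this.le
  have hR4 : 4 * C2 / ε < R := (le_max_right _ _).trans_lt hR
  have hR0' : (0:ℝ) < R := lt_of_le_of_lt (by positivity) hR4
  have hR0 : 0 < R := by exact_mod_cast hR0'
  obtain ⟨δ, hδ0, hδ1, hδ⟩ : ∃ δ : ℝ, 0 < δ ∧ δ ≤ 1 ∧ K * (2 * δ * V) ≤ ε / 2 := by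
    refine ⟨min 1 (ε / (4 * (K + 1) * V)), by positivity, min_le_left _ _, ?_⟩
    have h1 : min 1 (ε / (4 * (K + 1) * V)) ≤ ε / (4 * (K + 1) * V) := min_le_right _ _
    calc (K:ℝ) * (2 * min 1 (ε / (4 * (K + 1) * V)) * V)
        ≤ (K+1) * (2 * (ε / (4 * (K + 1) * V)) * V) := by gcongr; linarith
      _ = ε / 2 := by field_simp; ring
  -- choice of k
  obtain ⟨k, hk1, hk2, hk3⟩ : ∃ k : ℕ, M + 1 ≤ R * b ^ k ∧ 2 * (W * C4) / ((R * b ^ k : ℕ) : ℝ) ≤ ε ∧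
      η * (1 / (Q:ℝ)) ^ k * ((2 * (R * b ^ k) : ℕ) : ℝ) ^ α ≤ δ := by
    have t1 : Filter.Tendsto (fun k : ℕ => R * b ^ k) Filter.atTop Filter.atTop :=
      (tendsto_pow_atTop_atTop_of_one_lt hb2).const_mul_atTop' hR0
    have t2 : Filter.Tendsto (fun k : ℕ => 2 * (W * C4) / ((R * b ^ k : ℕ) : ℝ)) Filter.atTop
        (nhds 0) := (tendsto_natCast_atTop_atTop.comp t1).const_div_atTop _
    have t3 : Filter.Tendsto (fun k : ℕ => η * (1 / (Q:ℝ)) ^ k * ((2 * (R * b ^ k) : ℕ) : ℝ) ^ α)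
        Filter.atTop (nhds 0) := by
      have h1 : ∀ k : ℕ, η * (1 / (Q:ℝ)) ^ k * ((2 * (R * b ^ k) : ℕ) : ℝ) ^ α
          = (η * (2 * R) ^ α) * ((b:ℝ) ^ α / Q) ^ k := by
        intro k
        have hc : ((b:ℝ) ^ k) ^ α = ((b:ℝ) ^ α) ^ k := by
          rw [← Real.rpow_natCast, ← Real.rpow_natCast, ← Real.rpow_mul hb0'.le,
            ← Real.rpow_mul hb0'.le, mul_comm]
        push_cast
        rw [← mul_assoc, Real.mul_rpow (by positivity) (by positivity), div_pow, div_pow, hc]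
        simp only [one_pow]
        ring
      simp_rw [h1]
      have := tendsto_pow_atTop_nhds_zero_of_lt_one (r := (b:ℝ)^α / Q) (by positivity)
        ((div_lt_one hQ0).2 hbQ)
      simpa using this.const_mul (η * (2 * R) ^ α)
    obtain ⟨k, ⟨h1, h2⟩, h3⟩ := (((t1.eventually_ge_atTop (M+1)).and
      (t2.eventually (ge_mem_nhds hε))).and (t3.eventually (ge_mem_nhds hδ0))).exists
    exact ⟨k, h1, h2, h3⟩
  obtain ⟨S, x, hS1, hS2, hS3, hS4⟩ := cube_curve d α hα0 Q b hQ hb hbQ.le k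
  set N : ℕ := R * b ^ k with hN
  have hN1 : 1 ≤ N := by omega
  set μ : ℕ → Fin d → ℝ := fun t i => a i + η * x t i with hμ
  have hμ1 : ∀ t ∈ S, ∀ i, a i ≤ μ t i ∧ μ t i ≤ A := by
    intro t ht i
    have := hS2 t ht i
    simp only [hμ]
    constructor
    · nlinarith [this.1]
    · nlinarith [this.2, hA i]
  set u : Fin d → ℕ → ℂ := fun i q =>
    if b ^ k ≤ q / R ∧ (q / R - b ^ k) ∈ S then
      ρ (v i (q % R) * (Real.exp (μ (q / R - b ^ k) i * (((q % R : ℕ) : ℝ) ^ α - (q:ℝ) ^ α)) : ℂ))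
    else 0 with hu
  have hupow : ∀ i q, b ^ k ≤ q / R → (q / R - b ^ k) ∈ S → u i q ^ m =
      v i (q % R) * (Real.exp (μ (q / R - b ^ k) i * (((q % R : ℕ) : ℝ) ^ α - (q:ℝ) ^ α)) : ℂ) := by
    intro i q h1 h2
    simp only [hu]
    rw [if_pos ⟨h1, h2⟩, hρ]
  have husupp : ∀ i q, u i q ≠ 0 → b ^ k ≤ q / R ∧ (q / R - b ^ k) ∈ S := by
    intro i q h
    by_contra h'
    exact h (by simp only [hu]; rw [if_neg h'])
  have husupp2 : ∀ q, b ^ k ≤ q / R → (q / R - b ^ k) ∈ S → N ≤ q ∧ q < 2 * N := by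
    intro q h1 h2
    have h3 := hS1 _ h2
    constructor
    · have := (Nat.le_div_iff_mul_le hR0).1 h1
      rw [hN, mul_comm]; exact this
    · have h4 : q / R < 2 * b ^ k := by omega
      have := (Nat.div_lt_iff_lt_mul hR0).1 h4
      rw [hN]; linarith
  -- norm of v times exp is controlled
  have hvexp : ∀ i κ (μ' : ℝ), 0 ≤ μ' → μ' ≤ A →
      ‖v i κ‖ * Real.exp (μ' * (κ:ℝ) ^ α) ≤ W := by
    intro i κ μ' hμ' hμA
    rcases le_or_gt K κ with h | h
    · rw [hv i κ h]; simp; linarith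
    · have hκ : (κ:ℝ) ≤ K := by exact_mod_cast h.le
      rw [hW]
      gcongr
      exact hvV i κ
  have haD : ∀ i, 2 * D * η ≤ a i := fun i => by nlinarith [ha i]
  have ha0 : ∀ i, 0 ≤ a i := fun i => by
    have := haD i
    have : 0 < 2 * D * η := by positivity
    linarith
  have hubound : ∀ i q, ‖u i q‖ ≤ if N ≤ q then W * C4 / (q:ℝ)^2 else 0 := by
    intro i q
    by_cases h0 : u i q = 0
    · rw [h0]; simp; split_ifs <;> positivity
    obtain ⟨h1, h2⟩ := husupp i q h0
    obtain ⟨h3, -⟩ := husupp2 q h1 h2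
    rw [if_pos h3]
    have hp := hupow i q h1 h2
    set t := q / R - b ^ k
    obtain ⟨hl, hr⟩ := hμ1 t h2 i
    have hq := hdec4 q (hN1.trans h3)
    have h5 : ‖u i q‖ ≤ W * Real.exp (-(D * η / m * (q:ℝ)^α)) := by
      apply le_of_pow_le_pow_left₀ (by omega : m ≠ 0) (by positivity)
      rw [← norm_pow, hp, norm_mul, Complex.norm_real, Real.norm_eq_abs, Real.abs_exp, mul_pow,
        ← Real.exp_nat_mul, mul_sub, sub_eq_add_neg, Real.exp_add, ← mul_assoc]
      have e1 : (m:ℝ) * -(D * η / m * (q:ℝ)^α) = -(D * η * (q:ℝ)^α) := by field_simp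
      rw [e1]
      have w1 : W ≤ W ^ m := le_self_pow₀ hW1 (by omega)
      have hle : D * η ≤ μ t i := by
        have := haD i
        have : 0 < D * η := by positivity
        linarith
      gcongr
      exact (hvexp i _ _ ((ha0 i).trans hl) hr).trans w1
    calc ‖u i q‖ ≤ _ := h5
      _ ≤ W * (C4 / (q:ℝ)^2) := by gcongr
      _ = _ := by ring
  refine ⟨u, 2 * N, by omega, ?_, ?_, ?_⟩
  · intro i q h
    obtain ⟨h1, h2⟩ := husupp i q h
    have := husupp2 q h1 h2
    omega
  · intro i L'
    calc ∑ q ∈ range L', ‖u i q‖ ≤ ∑ q ∈ range L', (if N ≤ q then W * C4 / (q:ℝ)^2 else 0) :=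
          sum_le_sum fun q _ => hubound i q
      _ ≤ 2 * (W * C4) / N := sum_sq_tail _ (by positivity) N hN1 L'
      _ ≤ ε := hk2
  · intro lam hlam
    obtain ⟨t0, ht0, hy⟩ := hS3 (fun i => (lam i - a i) / η) (fun i => by
      constructor
      · apply div_nonneg _ hη.le; linarith [(hlam i).1]
      · rw [div_le_one hη]; linarith [(hlam i).2])
    have hclose : ∀ i, |lam i - μ t0 i| ≤ η * (1 / (Q:ℝ)) ^ k := by
      intro i
      have e1 : lam i - μ t0 i = η * ((lam i - a i) / η - x t0 i) := by
        simp only [hμ]; field_simp; ring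
      rw [e1, abs_mul, abs_of_pos hη]
      gcongr
      exact hy i
    have ht0' := hS1 t0 ht0
    refine ⟨R * (b ^ k + t0), ?_, ?_, ?_⟩
    · have : R * (b ^ k + t0) = N + R * t0 := by rw [hN]; ring
      omega
    · calc R * (b ^ k + t0) < R * (2 * b ^ k) := by
            apply Nat.mul_lt_mul_of_pos_left _ hR0; omega
        _ = 2 * N := by rw [hN]; ring
    intro i L'
    set n := R * (b ^ k + t0) with hn
    have hpt : ∀ j : ℕ, ‖(Real.exp (lam i * (((n + j : ℕ) : ℝ) ^ α - (j:ℝ) ^ α)) : ℂ)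
        * u i (n + j) ^ m - v i j‖ ≤
        (if j < K then 2 * δ * V else 0) + (if R ≤ j then C2 / (j:ℝ)^2 else 0) := by
      intro j
      have hdiv : (n + j) / R = b ^ k + t0 + j / R := by
        rw [hn, Nat.mul_add_div hR0]
      have hmod : (n + j) % R = j % R := by
        rw [hn, Nat.mul_add_mod_self_left]
      rcases lt_or_ge j R with hj | hj
      · -- main block
        rw [if_neg (by omega : ¬ R ≤ j), add_zero]
        have hd0 : j / R = 0 := Nat.div_eq_of_lt hj
        have hm0' : j % R = j := Nat.mod_eq_of_lt hj
        have ht : (n + j) / R - b ^ k = t0 := by rw [hdiv, hd0]; omega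
        have h1 : b ^ k ≤ (n + j) / R := by omega
        have hp := hupow i (n + j) h1 (by rw [ht]; exact ht0)
        have hq := (husupp2 (n+j) h1 (by rw [ht]; exact ht0)).2
        rw [ht, hmod, hm0'] at hp
        rw [hp]
        have e1 : (Real.exp (lam i * (((n + j : ℕ) : ℝ) ^ α - (j:ℝ) ^ α)) : ℂ) *
            (v i j * (Real.exp (μ t0 i * ((j:ℝ) ^ α - ((n + j : ℕ) : ℝ) ^ α)) : ℂ)) - v i j
            = v i j * ((Real.exp ((lam i - μ t0 i) * (((n + j : ℕ) : ℝ) ^ α - (j:ℝ) ^ α)) - 1 : ℝ) : ℂ) := by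
          have : (lam i - μ t0 i) * (((n + j : ℕ) : ℝ) ^ α - (j:ℝ) ^ α) =
              lam i * (((n + j : ℕ) : ℝ) ^ α - (j:ℝ) ^ α) +
              μ t0 i * ((j:ℝ) ^ α - ((n + j : ℕ) : ℝ) ^ α) := by ring
          rw [this, Real.exp_add]
          push_cast
          ring
        rw [e1]
        rcases le_or_gt K j with hK | hK
        · rw [hv i j hK, if_neg (by omega)]; simp
        rw [if_pos hK, norm_mul, Complex.norm_real, Real.norm_eq_abs]
        have hqq : ((n + j : ℕ) : ℝ) ^ α ≤ ((2 * N : ℕ) : ℝ) ^ α := by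
          gcongr
        have hj1 : (j:ℝ) ^ α ≤ ((n + j : ℕ) : ℝ) ^ α := by
          gcongr; omega
        have hj0 : 0 ≤ (j:ℝ)^α := by positivity
        have hx : |(lam i - μ t0 i) * (((n + j : ℕ) : ℝ) ^ α - (j:ℝ) ^ α)| ≤ δ := by
          rw [abs_mul, abs_of_nonneg (by linarith : 0 ≤ ((n + j : ℕ) : ℝ) ^ α - (j:ℝ) ^ α)]
          refine le_trans ?_ hk3
          apply mul_le_mul (hclose i) (by linarith) (by linarith) (by positivity)
        have h9 := Real.abs_exp_sub_one_le (hx.trans hδ1)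
        calc ‖v i j‖ * |Real.exp ((lam i - μ t0 i) * (((n + j : ℕ) : ℝ) ^ α - (j:ℝ) ^ α)) - 1|
            ≤ V * (2 * δ) := by
              gcongr
              · exact hvV i j
              · exact h9.trans (by linarith)
          _ = _ := by ring
      · -- later blocks
        have hvj : v i j = 0 := hv i j (hRK.trans hj)
        rw [if_neg (by omega), if_pos hj, zero_add, hvj, sub_zero]
        have hj1 : 1 ≤ j := by omega
        by_cases h0 : u i (n + j) = 0
        · rw [h0, zero_pow (by omega)]; simp; positivity
        obtain ⟨h1, h2⟩ := husupp i (n+j) h0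
        have hq := (husupp2 (n+j) h1 h2).2
        have hp := hupow i (n + j) h1 h2
        have ht : (n + j) / R - b ^ k = t0 + j / R := by rw [hdiv]; omega
        rw [ht, hmod] at hp
        rw [ht] at h2
        set s := j / R with hs
        have hs1 : 1 ≤ s := Nat.div_pos hj hR0
        have hRs : R * s ≤ j := Nat.mul_div_le j R
        obtain ⟨hl, hr⟩ := hμ1 _ h2 i
        rw [hp, norm_mul, norm_mul, Complex.norm_real, Complex.norm_real, Real.norm_eq_abs,
          Real.norm_eq_abs, Real.abs_exp, Real.abs_exp]
        have hqq : ((n + j : ℕ) : ℝ) ^ α ≤ ((2 * N : ℕ) : ℝ) ^ α := by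
          gcongr
        -- the crucial exponent
        have hdiff : |x t0 i - x (t0 + s) i| ≤ (b:ℝ)^α * ((s:ℝ) / (b:ℝ)^k) ^ α := by
          have := hS4 t0 ht0 _ h2 (by omega) i
          push_cast at this
          simpa using this
        have hlm : lam i - μ (t0 + s) i ≤
            η * (1 / (Q:ℝ)) ^ k + η * ((b:ℝ)^α * ((s:ℝ) / (b:ℝ)^k) ^ α) := by
          have e1 : lam i - μ (t0 + s) i = (lam i - μ t0 i) + η * (x t0 i - x (t0+s) i) := by
            simp only [hμ]; ring
          rw [e1]
          apply add_le_add ((le_abs_self _).trans (hclose i))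
          gcongr
          exact (le_abs_self _).trans hdiff
        have hsj : ((s:ℝ) / (b:ℝ)^k) ^ α * ((2 * N : ℕ) : ℝ) ^ α ≤ 2 ^ α * (j:ℝ)^α := by
          rw [← Real.mul_rpow (by positivity) (by positivity),
            ← Real.mul_rpow (by positivity) (by positivity)]
          apply Real.rpow_le_rpow (by positivity) _ hα0.le
          have e2 : (s:ℝ) / (b:ℝ)^k * ((2 * N : ℕ) : ℝ) = 2 * ((R * s : ℕ) : ℝ) := by
            rw [hN]; push_cast; field_simp
          rw [e2]
          have : ((R * s : ℕ) : ℝ) ≤ j := by exact_mod_cast hRs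
          linarith
        have hkey : (lam i - μ (t0 + s) i) * ((n + j : ℕ) : ℝ) ^ α ≤ 1 + D * η * (j:ℝ)^α := by
          calc (lam i - μ (t0 + s) i) * ((n + j : ℕ) : ℝ) ^ α
              ≤ (η * (1 / (Q:ℝ)) ^ k + η * ((b:ℝ)^α * ((s:ℝ) / (b:ℝ)^k) ^ α)) *
                ((2 * N : ℕ) : ℝ) ^ α := by
                apply mul_le_mul hlm hqq (by positivity) (by positivity)
            _ = η * (1 / (Q:ℝ)) ^ k * ((2 * N : ℕ) : ℝ) ^ α +
                η * (b:ℝ)^α * (((s:ℝ) / (b:ℝ)^k) ^ α * ((2 * N : ℕ) : ℝ) ^ α) := by ring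
            _ ≤ 1 + η * (b:ℝ)^α * (2 ^ α * (j:ℝ)^α) :=
                add_le_add (hk3.trans hδ1) (mul_le_mul_of_nonneg_left hsj (by positivity))
            _ = 1 + D * η * (j:ℝ)^α := by rw [hD]; ring
        have hlamj : 2 * D * η * (j:ℝ)^α ≤ lam i * (j:ℝ)^α := by
          gcongr
          exact (haD i).trans (hlam i).1
        have hexpo : Real.exp (lam i * (((n + j : ℕ) : ℝ) ^ α - (j:ℝ) ^ α)) *
            Real.exp (μ (t0 + s) i * (((j % R : ℕ) : ℝ) ^ α - ((n + j : ℕ) : ℝ) ^ α)) ≤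
            Real.exp (μ (t0 + s) i * ((j % R : ℕ) : ℝ) ^ α) * Real.exp 1 *
              Real.exp (-(D * η * (j:ℝ)^α)) := by
          rw [← Real.exp_add, ← Real.exp_add, ← Real.exp_add]
          apply Real.exp_le_exp.2
          linarith
        calc _ = ‖v i (j % R)‖ * (Real.exp (lam i * (((n + j : ℕ) : ℝ) ^ α - (j:ℝ) ^ α)) *
            Real.exp (μ (t0 + s) i * (((j % R : ℕ) : ℝ) ^ α - ((n + j : ℕ) : ℝ) ^ α))) := by ring
          _ ≤ ‖v i (j % R)‖ * (Real.exp (μ (t0 + s) i * ((j % R : ℕ) : ℝ) ^ α) * Real.exp 1 *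
              Real.exp (-(D * η * (j:ℝ)^α))) := by gcongr
          _ = (‖v i (j % R)‖ * Real.exp (μ (t0 + s) i * ((j % R : ℕ) : ℝ) ^ α)) * (Real.exp 1 *
              Real.exp (-(D * η * (j:ℝ)^α))) := by ring
          _ ≤ W * (Real.exp 1 * (C3 / (j:ℝ)^2)) := by
              gcongr
              · exact hvexp i _ _ ((ha0 i).trans hl) hr
              · exact hdec j hj1
          _ = C2 / (j:ℝ)^2 := by
              rw [hC2, hW, Real.exp_add]; ring
    calc _ ≤ ∑ j ∈ range L', ((if j < K then 2 * δ * V else 0) +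
          (if R ≤ j then C2 / (j:ℝ)^2 else 0)) := sum_le_sum fun j _ => hpt j
      _ = ∑ j ∈ range L', (if j < K then 2 * δ * V else 0) +
          ∑ j ∈ range L', (if R ≤ j then C2 / (j:ℝ)^2 else 0) := sum_add_distrib
      _ ≤ K * (2 * δ * V) + 2 * C2 / R := by
          apply add_le_add _ (sum_sq_tail _ hC20.le R hR0 L')
          rw [← sum_filter, sum_const, nsmul_eq_mul]
          gcongr
          calc #{j ∈ range L' | j < K} ≤ #(range K) := by
                apply card_le_card; intro j; simp
            _ = K := card_range K
      _ ≤ ε / 2 + ε / 2 := by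
          apply add_le_add hδ
          rw [div_le_iff₀ hR0']
          rw [div_lt_iff₀ hε] at hR4
          linarith
      _ = ε := by ring

lemma glue_seq {d : ℕ} (Good : ℕ → ℝ → ℕ → (Fin d → ℕ → ℂ) → ℕ → Prop)
    (h : ∀ s ε, 0 < ε → ∀ M, ∃ u L, Good s ε M u L) (g : ℕ → ℕ → ℝ) (hg : ∀ s L, 0 < g s L) :
    ∃ (us : ℕ → Fin d → ℕ → ℂ) (L : ℕ → ℕ) (δ : ℕ → ℝ), L 0 = 0 ∧ δ 0 = 1 / 2 ∧
      ∀ s, 0 < δ s ∧ Good s (δ s) (L s) (us s) (L (s+1)) ∧ δ (s+1) ≤ δ s / 2 ∧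
        δ (s+1) ≤ g s (L (s+1)) := by
  have h' : ∀ s ε M, ∃ u L, 0 < ε → Good s ε M u L := by
    intro s ε M
    by_cases hε : 0 < ε
    · obtain ⟨u, L, hu⟩ := h s ε hε M
      exact ⟨u, L, fun _ => hu⟩
    · exact ⟨0, 0, fun h => absurd h hε⟩
  choose U Lf hG using h'
  let st : ℕ → ℕ × ℝ := fun s => Nat.rec (0, 1/2)
    (fun s p => (Lf s p.2 p.1, min (p.2/2) (g s (Lf s p.2 p.1)))) s
  have hst : ∀ s, st (s+1) = (Lf s (st s).2 (st s).1,
      min ((st s).2/2) (g s (Lf s (st s).2 (st s).1))) := fun s => rfl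
  have hpos : ∀ s, 0 < (st s).2 := by
    intro s
    induction s with
    | zero => simp [st]
    | succ s ih =>
      rw [hst]
      exact lt_min (by linarith) (hg _ _)
  refine ⟨fun s => U s (st s).2 (st s).1, fun s => (st s).1, fun s => (st s).2, rfl, rfl, ?_⟩
  intro s
  refine ⟨hpos s, ?_, ?_, ?_⟩
  · simp only [hst]
    exact hG s _ _ (hpos s)
  · simp only [hst]; exact min_le_left _ _
  · simp only [hst]; exact min_le_right _ _

/-- Finitely supported targets. -/
noncomputable def tgt (d K : ℕ) (f : Fin d → Fin K → ℕ) (i : Fin d) (k : ℕ) : ℂ :=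
  if h : k < K then TopologicalSpace.denseSeq ℂ (f i ⟨k, h⟩) else 0

lemma tgt_zero (d K : ℕ) (f : Fin d → Fin K → ℕ) (i : Fin d) (k : ℕ) (h : K ≤ k) :
    tgt d K f i k = 0 := by
  rw [tgt, dif_neg (by omega)]

lemma tgt_bound (d K : ℕ) (f : Fin d → Fin K → ℕ) : ∃ V : ℝ, 1 ≤ V ∧ ∀ i k, ‖tgt d K f i k‖ ≤ V := by
  refine ⟨1 + ∑ i, ∑ k ∈ range K, ‖tgt d K f i k‖, ?_, ?_⟩
  · have : 0 ≤ ∑ i, ∑ k ∈ range K, ‖tgt d K f i k‖ := by positivity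
    linarith
  · intro i k
    rcases le_or_gt K k with h | h
    · rw [tgt_zero d K f i k h]; simp; positivity
    · have h1 : ‖tgt d K f i k‖ ≤ ∑ k ∈ range K, ‖tgt d K f i k‖ :=
        single_le_sum (f := fun k => ‖tgt d K f i k‖) (fun _ _ => norm_nonneg _) (mem_range.2 h)
      have h2 : ∑ k ∈ range K, ‖tgt d K f i k‖ ≤ ∑ i, ∑ k ∈ range K, ‖tgt d K f i k‖ :=
        single_le_sum (f := fun i => ∑ k ∈ range K, ‖tgt d K f i k‖)
          (fun _ _ => by positivity) (mem_univ i)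
      linarith

lemma rpow_sub_le (α : ℝ) (h0 : 0 < α) (h1 : α ≤ 1) (n k : ℕ) :
    ((n + k : ℕ) : ℝ) ^ α - (k:ℝ) ^ α ≤ (n:ℝ) ^ α := by
  have := Real.rpow_add_le_add_rpow (Nat.cast_nonneg n : (0:ℝ) ≤ n) (Nat.cast_nonneg k) h0.le h1
  push_cast
  linarith

set_option maxHeartbeats 2000000 in
lemma universal_vector (d : ℕ) (hd : 1 ≤ d) (α : ℝ) (hα0 : 0 < α) (hα1 : α < 1 / (d : ℝ)) :
    ∃ u : Fin d → ℕ → ℂ, (∀ i L', ∑ q ∈ range L', ‖u i q‖ ≤ 1) ∧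
      ∀ lam : Fin d → ℝ, (∀ i, 0 < lam i) → ∀ m, 1 ≤ m → ∀ K (f : Fin d → Fin K → ℕ),
      ∀ ε, 0 < ε → ∀ M : ℕ, ∃ n, M ≤ n ∧ ∀ i L', ∑ k ∈ range L',
        ‖(Real.exp (lam i * (((n + k : ℕ) : ℝ) ^ α - (k:ℝ) ^ α)) : ℂ) * u i (n + k) ^ m
          - tgt d K f i k‖ ≤ ε := by
  have hα2 : α ≤ 1 := by
    have hd' : (1:ℝ) ≤ d := by exact_mod_cast hd
    have : 1 / (d:ℝ) ≤ 1 := by rw [div_le_one (by linarith)]; exact hd'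
    linarith
  obtain ⟨C0, hC0, hst⟩ := stage d hd α hα0 hα1
  obtain ⟨tk, htk⟩ := exists_surjective_nat (ℕ × ℕ × (Fin d → ℕ) × (Σ K : ℕ, Fin d → Fin K → ℕ))
  let mm : ℕ → ℕ := fun s => (tk s.unpair.1).1 + 1
  let η : ℕ → ℝ := fun s => 1 / ((tk s.unpair.1).2.1 + 1 : ℝ)
  let a : ℕ → Fin d → ℝ := fun s i => ((tk s.unpair.1).2.2.1 i + C0 : ℝ) * η s
  let v : ℕ → Fin d → ℕ → ℂ := fun s => tgt d (tk s.unpair.1).2.2.2.1 (tk s.unpair.1).2.2.2.2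
  let A : ℕ → ℝ := fun s => ∑ i, a s i + η s
  have hη : ∀ s, 0 < η s := fun s => by simp only [η]; positivity
  have ha : ∀ s i, C0 * η s ≤ a s i := fun s i => by
    simp only [a]
    have := hη s
    gcongr
    simp
  have ha0 : ∀ s i, 0 ≤ a s i := fun s i => by
    have := hη s
    have h2 := ha s i
    have : 0 ≤ C0 * η s := by positivity
    linarith
  have hA : ∀ s i, a s i + η s ≤ A s := fun s i => by
    simp only [A]
    have := single_le_sum (f := fun i => a s i) (fun i _ => ha0 s i) (mem_univ i)
    simpa using this
  let Good : ℕ → ℝ → ℕ → (Fin d → ℕ → ℂ) → ℕ → Prop := fun s ε M u L =>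
    M < L ∧ (∀ i q, u i q ≠ 0 → M ≤ q ∧ q < L) ∧
        (∀ i L', ∑ q ∈ range L', ‖u i q‖ ≤ ε) ∧
        ∀ lam : Fin d → ℝ, (∀ i, a s i ≤ lam i ∧ lam i ≤ a s i + η s) →
          ∃ n, M ≤ n ∧ n < L ∧ ∀ i L', ∑ k ∈ range L',
            ‖(Real.exp (lam i * (((n + k : ℕ) : ℝ) ^ α - (k:ℝ) ^ α)) : ℂ) * u i (n + k) ^ (mm s)
              - v s i k‖ ≤ ε
  have hGood : ∀ s ε, 0 < ε → ∀ M, ∃ u L, Good s ε M u L := by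
    intro s ε hε M
    obtain ⟨V, hV1, hV⟩ := tgt_bound d (tk s.unpair.1).2.2.2.1 (tk s.unpair.1).2.2.2.2
    exact hst (mm s) (by simp [mm]) (tk s.unpair.1).2.2.2.1 (v s) (tgt_zero d _ _) V hV1 hV (η s) (hη s)
      (a s) (ha s) (A s) (hA s) ε hε M
  obtain ⟨us, L, δ, hL0, hδ0, hs⟩ := glue_seq Good hGood
    (fun s l => (1/2)^s / 2 * Real.exp (-(A s * (l:ℝ)^α))) (fun s l => by positivity)
  have hδpos : ∀ s, 0 < δ s := fun s => (hs s).1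
  have hLlt : ∀ s, L s < L (s+1) := fun s => (hs s).2.1.1
  have hLmono : StrictMono L := strictMono_nat_of_lt_succ hLlt
  have hLs : ∀ s, s ≤ L s := fun s => hLmono.le_apply
  have hδle : ∀ s, δ s ≤ (1/2)^s := by
    intro s
    induction s with
    | zero => rw [hδ0]; norm_num
    | succ s ih =>
      have := (hs s).2.2.1
      rw [pow_succ]; linarith
  have hsupp : ∀ s i q, us s i q ≠ 0 → L s ≤ q ∧ q < L (s+1) := fun s => (hs s).2.1.2.1
  let u : Fin d → ℕ → ℂ := fun i q => ∑ s ∈ range (q+1), us s i q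
  have hu : ∀ s i q, L s ≤ q → q < L (s+1) → u i q = us s i q := by
    intro s i q h1 h2
    apply sum_eq_single s
    · intro s' _ hne
      by_contra h0
      obtain ⟨h3, h4⟩ := hsupp s' i q h0
      rcases lt_or_gt_of_ne hne with h | h
      · have := hLmono.monotone (show s' + 1 ≤ s from h); omega
      · have := hLmono.monotone (show s + 1 ≤ s' from h); omega
    · intro h
      have := hLs s
      simp at h; omega
  have htail1 : ∀ i s j, ∑ q ∈ Ico (L s) (L (s+j)), ‖u i q‖ ≤ 2 * δ s - 2 * δ (s+j) := by
    intro i s j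
    induction j with
    | zero => simp
    | succ j ih =>
      rw [← sum_Ico_consecutive _ (hLmono.monotone (Nat.le_add_right s j))
        (hLmono.monotone (show s + j ≤ s + (j+1) by omega))]
      have h1 : ∑ q ∈ Ico (L (s+j)) (L (s+(j+1))), ‖u i q‖ ≤ δ (s+j) := by
        calc ∑ q ∈ Ico (L (s+j)) (L (s+(j+1))), ‖u i q‖
            = ∑ q ∈ Ico (L (s+j)) (L (s+(j+1))), ‖us (s+j) i q‖ := by
              apply sum_congr rfl
              intro q hq
              rw [mem_Ico] at hq
              rw [hu (s+j) i q hq.1 hq.2]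
          _ ≤ ∑ q ∈ range (L (s+(j+1))), ‖us (s+j) i q‖ := by
              apply sum_le_sum_of_subset_of_nonneg
              · intro q; simp
              · intros; positivity
          _ ≤ _ := (hs (s+j)).2.1.2.2.1 i _
      have h2 := (hs (s+j)).2.2.1
      rw [show s + j + 1 = s + (j+1) by omega] at h2
      linarith
  have htail : ∀ i s L', ∑ q ∈ Ico (L s) L', ‖u i q‖ ≤ 2 * δ s := by
    intro i s L'
    calc ∑ q ∈ Ico (L s) L', ‖u i q‖ ≤ ∑ q ∈ Ico (L s) (L (s+L')), ‖u i q‖ := by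
          apply sum_le_sum_of_subset_of_nonneg
          · apply Ico_subset_Ico_right
            exact (Nat.le_add_left L' s).trans (hLs _)
          · intros; positivity
      _ ≤ _ := htail1 i s L'
      _ ≤ _ := by linarith [hδpos (s+L')]
  have hnorm : ∀ i L', ∑ q ∈ range L', ‖u i q‖ ≤ 1 := by
    intro i L'
    have := htail i 0 L'
    rw [hL0, hδ0] at this
    rw [range_eq_Ico]; linarith
  have hu1 : ∀ i q, ‖u i q‖ ≤ 1 := by
    intro i q
    exact (single_le_sum (f := fun q => ‖u i q‖) (fun _ _ => norm_nonneg _)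
      (mem_range.2 (Nat.lt_succ_self q))).trans (hnorm i (q+1))
  refine ⟨u, hnorm, ?_⟩
  intro lam hlam m hm K f ε hε M
  -- choose the box
  obtain ⟨r, hr⟩ := exists_nat_gt (∑ i, C0 / lam i)
  have hr' : ∀ i, C0 ≤ ⌊lam i * (r + 1)⌋₊ := by
    intro i
    apply Nat.le_floor
    have h1 : C0 / lam i ≤ ∑ i, C0 / lam i := single_le_sum (f := fun i => (C0:ℝ) / lam i)
      (fun i _ => by have := hlam i; positivity) (mem_univ i)
    have h2 : C0 / lam i ≤ r + 1 := by linarith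
    rw [div_le_iff₀ (hlam i)] at h2
    linarith
  obtain ⟨c, hc⟩ := htk (m - 1, r, fun i => ⌊lam i * (r + 1)⌋₊ - C0, ⟨K, f⟩)
  obtain ⟨M', hM'⟩ := exists_pow_lt_of_lt_one (show 0 < ε / 2 by linarith) (show (1/2:ℝ) < 1 by norm_num)
  obtain ⟨s, hsM, hsc⟩ : ∃ s : ℕ, max M M' ≤ s ∧
      tk s.unpair.1 = (m - 1, r, fun i => ⌊lam i * (r + 1)⌋₊ - C0, ⟨K, f⟩) :=
    ⟨Nat.pair c (max M M'), Nat.right_le_pair _ _, by rw [Nat.unpair_pair]; exact hc⟩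
  have hms : mm s = m := by simp only [mm, hsc]; omega
  have hηs : η s = 1 / ((r:ℝ) + 1) := by simp only [η, hsc]
  have has : ∀ i, a s i = ⌊lam i * (r + 1)⌋₊ * (1 / ((r:ℝ) + 1)) := by
    intro i
    simp only [a, hηs, hsc]
    rw [Nat.cast_sub (hr' i)]
    ring
  have hvs : v s = tgt d K f := congrArg (fun z => tgt d z.2.2.2.1 z.2.2.2.2) hsc
  have hbox : ∀ i, a s i ≤ lam i ∧ lam i ≤ a s i + η s := by
    intro i
    rw [has, hηs]
    have hr0 : (0:ℝ) < r + 1 := by positivity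
    have h1 := Nat.floor_le (a := lam i * (r+1)) (by have := hlam i; positivity)
    have h2 := Nat.lt_floor_add_one (lam i * (r+1))
    constructor
    · rw [mul_one_div, div_le_iff₀ hr0]; exact h1
    · rw [← add_one_mul, mul_one_div, le_div_iff₀ hr0]; exact h2.le
  obtain ⟨n, hn1, hn2, hn3⟩ := (hs s).2.1.2.2.2 lam hbox
  rw [hms, hvs] at hn3
  refine ⟨n, ?_, ?_⟩
  · calc M ≤ max M M' := le_max_left _ _
      _ ≤ s := hsM
      _ ≤ L s := hLs s
      _ ≤ n := hn1
  intro i L'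
  have hE : ∀ k : ℕ, Real.exp (lam i * (((n + k : ℕ) : ℝ) ^ α - (k:ℝ) ^ α)) ≤
      Real.exp (A s * (L (s+1) : ℝ)^α) := by
    intro k
    apply Real.exp_le_exp.2
    calc lam i * (((n + k : ℕ) : ℝ) ^ α - (k:ℝ) ^ α) ≤ lam i * (n:ℝ)^α := by
          have := hlam i
          gcongr
          exact rpow_sub_le α hα0 hα2 n k
      _ ≤ A s * (L (s+1) : ℝ)^α := by
          have h1 := hlam i
          have h2 : lam i ≤ A s := (hbox i).2.trans (hA s i)
          have h3 : 0 ≤ A s := by linarith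
          have h4 : (n:ℝ) ≤ (L (s+1) : ℝ) := by exact_mod_cast hn2.le
          exact mul_le_mul h2 (Real.rpow_le_rpow (Nat.cast_nonneg n) h4 hα0.le) (by positivity) h3
  have hpt : ∀ k : ℕ, ‖(Real.exp (lam i * (((n + k : ℕ) : ℝ) ^ α - (k:ℝ) ^ α)) : ℂ) * u i (n + k) ^ m
          - tgt d K f i k‖ ≤
      ‖(Real.exp (lam i * (((n + k : ℕ) : ℝ) ^ α - (k:ℝ) ^ α)) : ℂ) * us s i (n + k) ^ m
          - tgt d K f i k‖ + Real.exp (A s * (L (s+1) : ℝ)^α) *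
          (if L (s+1) ≤ n + k then ‖u i (n+k)‖ else 0) := by
    intro k
    rcases lt_or_ge (n + k) (L (s+1)) with h | h
    · rw [if_neg (by omega), hu s i (n+k) (by omega) h]; simp
    · rw [if_pos h]
      have h0 : us s i (n+k) = 0 := by
        by_contra h'
        have := hsupp s i _ h'
        omega
      rw [h0, zero_pow (by omega), mul_zero, zero_sub, norm_neg]
      refine (norm_sub_le _ _).trans ?_
      rw [add_comm]
      refine add_le_add le_rfl ?_
      rw [norm_mul, Complex.norm_real, Real.norm_eq_abs, Real.abs_exp, norm_pow]
      exact mul_le_mul (hE k) (pow_le_of_le_one (norm_nonneg _) (hu1 i _) (by omega))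
        (by positivity) (Real.exp_nonneg _)
  have hsh : ∑ k ∈ range L', (if L (s+1) ≤ n + k then ‖u i (n+k)‖ else 0) ≤ 2 * δ (s+1) := by
    calc ∑ k ∈ range L', (if L (s+1) ≤ n + k then ‖u i (n+k)‖ else 0)
        = ∑ q ∈ Ico n (n + L'), (if L (s+1) ≤ q then ‖u i q‖ else 0) := by
          rw [sum_Ico_eq_sum_range]; simp
      _ = ∑ q ∈ (Ico n (n + L')).filter (fun q => L (s+1) ≤ q), ‖u i q‖ := by
          rw [sum_filter]
      _ ≤ ∑ q ∈ Ico (L (s+1)) (n + L'), ‖u i q‖ := by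
          apply sum_le_sum_of_subset_of_nonneg
          · intro q; simp; omega
          · intros; positivity
      _ ≤ _ := htail i (s+1) _
  calc _ ≤ ∑ k ∈ range L', (‖(Real.exp (lam i * (((n + k : ℕ) : ℝ) ^ α - (k:ℝ) ^ α)) : ℂ) * us s i (n + k) ^ m
          - tgt d K f i k‖ + Real.exp (A s * (L (s+1) : ℝ)^α) *
          (if L (s+1) ≤ n + k then ‖u i (n+k)‖ else 0)) := sum_le_sum fun k _ => hpt k
    _ ≤ δ s + Real.exp (A s * (L (s+1) : ℝ)^α) * (2 * δ (s+1)) := by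
        rw [sum_add_distrib, ← mul_sum]
        gcongr
        exact hn3 i L'
    _ ≤ (1/2)^s + (1/2)^s := by
        apply add_le_add (hδle s)
        have h1 := (hs s).2.2.2
        calc Real.exp (A s * (L (s+1) : ℝ)^α) * (2 * δ (s+1)) ≤
            Real.exp (A s * (L (s+1) : ℝ)^α) * (2 * ((1/2)^s / 2 * Real.exp (-(A s * (L (s+1):ℝ)^α)))) := by
              gcongr
          _ = (1/2)^s * (Real.exp (A s * (L (s+1) : ℝ)^α) * Real.exp (-(A s * (L (s+1):ℝ)^α))) := by ring
          _ = (1/2)^s := by rw [← Real.exp_add]; simp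
    _ ≤ (1/2)^M' + (1/2)^M' := by
        have : (1/2:ℝ)^s ≤ (1/2)^M' := by
          apply pow_le_pow_of_le_one (by norm_num) (by norm_num)
          exact (le_max_right _ _).trans hsM
        linarith
    _ ≤ ε := by linarith

lemma iter_formula (p : ℝ≥0∞) [Fact (1 ≤ p)] (d : ℕ) (α : ℝ)
    (T : (Fin d → lpC p) →L[ℂ] (Fin d → lpC p)) (lam : Fin d → ℝ)
    (hT : IsProductShift p d (wExp α) T lam) (n : ℕ) :
    ∀ (x : Fin d → lpC p) (i : Fin d) (k : ℕ), ((T ^ n) x) i k =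
      (Real.exp (lam i * (((n + k : ℕ) : ℝ) ^ α - (k:ℝ) ^ α)) : ℂ) * x i (n + k) := by
  induction n with
  | zero => intro x i k; simp
  | succ n ih =>
    intro x i k
    rw [pow_succ, ContinuousLinearMap.mul_apply, ih (T x) i k, hT x i (n + k), ← mul_assoc, wExp,
      ← Complex.ofReal_mul, ← Real.exp_add]
    have e : n + 1 + k = n + k + 1 := by omega
    rw [e]
    congr 3
    have e2 : ((n + k + 1 : ℕ) : ℝ) - 1 = ((n + k : ℕ) : ℝ) := by push_cast; ring
    rw [e2]
    ring

lemma lp_norm_le (p : ℝ≥0∞) [hp1 : Fact (1 ≤ p)] (hp : p ≠ ⊤) (x : lpC p) (B : ℝ)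
    (h : ∀ L, ∑ k ∈ range L, ‖x k‖ ≤ B) : ‖x‖ ≤ B := by
  have ht := (lp.hasSum_single hp x).tendsto_sum_nat.norm
  refine le_of_tendsto' ht fun L => ?_
  refine (norm_sum_le _ _).trans ?_
  refine le_trans (le_of_eq ?_) (h L)
  apply sum_congr rfl
  intro k _
  exact lp.norm_single (zero_lt_one.trans_le hp1.out) k _

lemma memlp_of_summable (p : ℝ≥0∞) [hp1 : Fact (1 ≤ p)] (f : ℕ → ℂ) (h : Summable fun k => ‖f k‖) :
    Memℓp (E := fun _ : ℕ => ℂ) f p := by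
  have : Memℓp (E := fun _ : ℕ => ℂ) f 1 := memℓp_gen (by simpa using h)
  exact this.of_exponent_ge hp1.out

lemma tgt_dense (p : ℝ≥0∞) [hp1 : Fact (1 ≤ p)] (hp : p ≠ ⊤) (d : ℕ) (z : Fin d → lpC p)
    (ε : ℝ) (hε : 0 < ε) : ∃ (K : ℕ) (f : Fin d → Fin K → ℕ) (w : Fin d → lpC p),
      (∀ i k, w i k = tgt d K f i k) ∧ ∀ i, ‖w i - z i‖ < ε := by
  have h1 : ∀ i, ∀ᶠ K : ℕ in Filter.atTop, ‖∑ k ∈ range K, lp.single p k (z i k) - z i‖ < ε / 2 := by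
    intro i
    have := (lp.hasSum_single hp (z i)).tendsto_sum_nat
    have h2 := Metric.tendsto_nhds.1 this (ε/2) (by linarith)
    simpa [dist_eq_norm] using h2
  obtain ⟨K, hK⟩ := (Filter.eventually_all.2 h1).exists
  have h2 : ∀ (i : Fin d) (k : Fin K), ∃ j, ‖TopologicalSpace.denseSeq ℂ j - z i k‖ < ε / (2 * (K + 1)) := by
    intro i k
    obtain ⟨j, hj⟩ := (TopologicalSpace.denseRange_denseSeq ℂ).exists_dist_lt (z i k)
      (show 0 < ε / (2 * (K + 1)) by positivity)
    exact ⟨j, by rw [← dist_eq_norm, dist_comm]; exact hj⟩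
  choose f hf using h2
  refine ⟨K, f, fun i => ∑ k ∈ range K, lp.single p k (tgt d K f i k), ?_, ?_⟩
  · intro i k
    rw [lp.coeFn_sum, Finset.sum_apply]
    simp only [lp.single_apply]
    rcases lt_or_ge k K with h | h
    · rw [sum_eq_single k]
      · simp
      · intro b _ hb
        rw [Pi.single_apply, if_neg hb.symm]
      · intro h'; simp at h'; omega
    · rw [tgt_zero d K f i k h]
      apply sum_eq_zero
      intro b hb
      rw [mem_range] at hb
      rw [Pi.single_apply, if_neg (by omega)]
  · intro i
    have h3 : ‖∑ k ∈ range K, lp.single (E := fun _ : ℕ => ℂ) p k (tgt d K f i k) -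
        ∑ k ∈ range K, lp.single (E := fun _ : ℕ => ℂ) p k (z i k)‖ ≤ ε / 2 := by
      rw [← sum_sub_distrib]
      calc _ ≤ ∑ k ∈ range K, ‖lp.single (E := fun _ : ℕ => ℂ) p k (tgt d K f i k) -
            lp.single (E := fun _ : ℕ => ℂ) p k (z i k)‖ := norm_sum_le _ _
        _ ≤ ∑ k ∈ range K, ε / (2 * (K + 1)) := by
            apply sum_le_sum
            intro k hk
            rw [mem_range] at hk
            rw [← lp.single_sub, lp.norm_single (zero_lt_one.trans_le hp1.out), tgt, dif_pos hk]
            exact (hf i ⟨k, hk⟩).le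
        _ = K * (ε / (2 * (K + 1))) := by simp
        _ ≤ (K + 1) * (ε / (2 * (K + 1))) := by gcongr; linarith
        _ = ε / 2 := by field_simp
    have h4 := hK i
    calc _ = ‖(∑ k ∈ range K, lp.single (E := fun _ : ℕ => ℂ) p k (tgt d K f i k) -
        ∑ k ∈ range K, lp.single (E := fun _ : ℕ => ℂ) p k (z i k)) +
        (∑ k ∈ range K, lp.single (E := fun _ : ℕ => ℂ) p k (z i k) - z i)‖ := by
          congr 1; abel
      _ ≤ _ := norm_add_le _ _
      _ < ε := by linarith

lemma exists_lp (p : ℝ≥0∞) [hp1 : Fact (1 ≤ p)] (f : ℕ → ℂ) (h : Summable fun k => ‖f k‖) :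
    ∃ x : lpC p, ∀ n, x n = f n :=
  ⟨⟨f, memlp_of_summable p f h⟩, fun _ => rfl⟩

set_option maxHeartbeats 2000000 in
/-- Example 2.4 of the paper, case `X = ℓᵖ(ℕ)`, `w 1 (λ) ⋯ w n (λ) = exp (λ n^α)`. -/
theorem stmt_11 (d : ℕ) (hd : 1 ≤ d) (p : ℝ≥0∞) [Fact (1 ≤ p)] (hp : p ≠ ⊤)
    (α : ℝ) (hα0 : 0 < α) (hα1 : α < 1 / (d : ℝ))
    (T : (Fin d → ℝ) → ((Fin d → lpC p) →L[ℂ] (Fin d → lpC p)))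
    (hT : ∀ lam : Fin d → ℝ, (∀ i, 0 < lam i) → IsProductShift p d (wExp α) (T lam) lam) :
    CommonHypercyclicAlgebraCW p d {lam | ∀ i, 0 < lam i} T := by
  obtain ⟨u, hu1, hu⟩ := universal_vector d hd α hα0 hα1
  have husum : ∀ i, Summable fun q => ‖u i q‖ := fun i =>
    summable_of_sum_range_le (fun _ => norm_nonneg _) (hu1 i)
  have hule : ∀ i q, ‖u i q‖ ≤ 1 := by
    intro i q
    exact (single_le_sum (f := fun q => ‖u i q‖) (fun _ _ => norm_nonneg _)
      (mem_range.2 (Nat.lt_succ_self q))).trans (hu1 i (q+1))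
  have hu0 : ∀ i, Filter.Tendsto (u i) Filter.atTop (nhds 0) := fun i =>
    tendsto_zero_iff_norm_tendsto_zero.2 (husum i).tendsto_atTop_zero
  -- every polynomial without constant term gives an element
  have hex : ∀ P : Polynomial ℂ, P.coeff 0 = 0 → ∃ x : Fin d → lpC p, ∀ i n, x i n = P.eval (u i n) := by
    intro P hP
    obtain ⟨G, rfl⟩ := Polynomial.X_dvd_iff.2 hP
    obtain ⟨B, hB⟩ := (isCompact_closedBall (0:ℂ) 1).exists_bound_of_continuousOn
      (f := fun z => G.eval z) G.continuous.continuousOn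
    have hs : ∀ i, Summable fun n => ‖(Polynomial.X * G).eval (u i n)‖ := by
      intro i
      refine Summable.of_nonneg_of_le (fun _ => norm_nonneg _) (fun n => ?_) ((husum i).mul_right B)
      rw [Polynomial.eval_mul, Polynomial.eval_X, norm_mul]
      gcongr
      exact hB _ (by simpa using hule i n)
    choose x hx using fun i => exists_lp p _ (hs i)
    exact ⟨x, hx⟩
  -- the key claim
  have key : ∀ P : Polynomial ℂ, P.coeff 0 = 0 → P ≠ 0 → ∀ x : Fin d → lpC p,
      (∀ i n, x i n = P.eval (u i n)) → ∀ lam : Fin d → ℝ, (∀ i, 0 < lam i) →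
      Dense (Set.range fun n : ℕ => ((T lam) ^ (n + 1)) x) := by
    intro P hP0 hP x hx lam hlam
    obtain ⟨G, hG, hGX⟩ := Polynomial.exists_eq_pow_rootMultiplicity_mul_and_not_dvd P hP 0
    set m := Polynomial.rootMultiplicity 0 P with hm
    rw [Polynomial.C_0, sub_zero] at hG hGX
    have hc : G.eval 0 ≠ 0 := by
      intro h
      exact hGX (Polynomial.X_dvd_iff.2 (by rw [Polynomial.coeff_zero_eq_eval_zero]; exact h))
    have hm1 : 1 ≤ m := by
      rw [Nat.one_le_iff_ne_zero]
      intro h0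
      rw [h0, pow_zero, one_mul] at hG
      apply hc
      rw [← hG, ← Polynomial.coeff_zero_eq_eval_zero, hP0]
    set c := G.eval 0 with hcdef
    have hc' : 0 < ‖c‖ := norm_pos_iff.2 hc
    rw [Metric.dense_iff]
    intro y ε hε
    obtain ⟨K, f, w, hw, hwy⟩ := tgt_dense p hp d (c⁻¹ • y) (ε / 2 / ‖c‖) (by positivity)
    obtain ⟨V, hV1, hV⟩ := tgt_bound d K f
    have htsum : ∀ i L, ∑ k ∈ range L, ‖tgt d K f i k‖ ≤ K * V := by
      intro i L
      calc ∑ k ∈ range L, ‖tgt d K f i k‖ ≤ ∑ k ∈ range L, (if k < K then V else 0) := by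
            apply sum_le_sum
            intro k _
            split_ifs with h
            · exact hV i k
            · rw [tgt_zero d K f i k (by omega)]; simp
        _ ≤ K * V := by
            rw [← sum_filter, sum_const, nsmul_eq_mul]
            gcongr
            calc #{j ∈ range L | j < K} ≤ #(range K) := by
                  apply card_le_card; intro j; simp
              _ = K := card_range K
    obtain ⟨ε', hε'0, hε'1, hε'⟩ : ∃ ε' : ℝ, 0 < ε' ∧ ε' ≤ 1 ∧ K * V * ε' ≤ ε / 8 := by
      refine ⟨min 1 (ε / (8 * (K * V + 1))), by positivity, min_le_left _ _, ?_⟩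
      calc K * V * min 1 (ε / (8 * (K * V + 1))) ≤ (K * V + 1) * (ε / (8 * (K * V + 1))) := by
            gcongr
            · linarith
            · exact min_le_right _ _
        _ = ε / 8 := by field_simp
    have hGt : ∀ i, ∀ᶠ q in Filter.atTop, ‖G.eval (u i q) - c‖ < ε' := by
      intro i
      have : Filter.Tendsto (fun q => G.eval (u i q)) Filter.atTop (nhds c) :=
        (G.continuous.tendsto 0).comp (hu0 i)
      simpa [dist_eq_norm] using Metric.tendsto_nhds.1 this ε' hε'0
    obtain ⟨M, hM⟩ := Filter.eventually_atTop.1 (Filter.eventually_all.2 hGt)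
    obtain ⟨n, hn, hn2⟩ := hu lam hlam m hm1 K f (ε / (8 * (‖c‖ + 1))) (by positivity) (M + 1)
    have hn1 : n - 1 + 1 = n := by omega
    refine ⟨((T lam) ^ n) x, ?_, ⟨n - 1, by simp only [hn1]⟩⟩
    rw [Metric.mem_ball, dist_pi_lt_iff hε]
    intro i
    rw [dist_eq_norm]
    have h1 : ‖((T lam) ^ n) x i - c • w i‖ ≤ ε / 4 := by
      apply lp_norm_le p hp
      intro L
      have hpt : ∀ k, ‖(((T lam) ^ n) x i - c • w i) k‖ ≤
          ‖(Real.exp (lam i * (((n + k : ℕ) : ℝ) ^ α - (k:ℝ) ^ α)) : ℂ) * u i (n + k) ^ m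
            - tgt d K f i k‖ * (‖c‖ + 1) + ‖tgt d K f i k‖ * ε' := by
        intro k
        have hg := hM (n + k) (by omega) i
        rw [lp.coeFn_sub, Pi.sub_apply, lp.coeFn_smul, Pi.smul_apply, hw,
          iter_formula p d α (T lam) lam (hT lam hlam) n x i k, hx, hG]
        rw [Polynomial.eval_mul, Polynomial.eval_pow, Polynomial.eval_X, smul_eq_mul]
        set E : ℂ := (Real.exp (lam i * (((n + k : ℕ) : ℝ) ^ α - (k:ℝ) ^ α)) : ℂ)
        set g := G.eval (u i (n + k))
        have e : E * (u i (n+k) ^ m * g) - c * tgt d K f i k =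
            (E * u i (n+k) ^ m - tgt d K f i k) * g + tgt d K f i k * (g - c) := by ring
        have hgc : ‖g‖ ≤ ‖c‖ + 1 := by
          have : g = c + (g - c) := by ring
          rw [this]
          exact (norm_add_le _ _).trans (by linarith)
        rw [e]
        refine (norm_add_le _ _).trans ?_
        rw [norm_mul, norm_mul]
        gcongr
      calc _ ≤ _ := sum_le_sum fun k _ => hpt k
        _ ≤ ε / (8 * (‖c‖ + 1)) * (‖c‖ + 1) + K * V * ε' := by
            rw [sum_add_distrib, ← sum_mul, ← sum_mul]
            gcongr
            · exact hn2 i L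
            · exact htsum i L
        _ ≤ ε / 8 + ε / 8 := by
            apply add_le_add _ hε'
            apply le_of_eq; field_simp
        _ = ε / 4 := by ring
    have h2 : ‖c • w i - y i‖ ≤ ε / 2 := by
      have e : c • w i - y i = c • (w i - (c⁻¹ • y) i) := by
        rw [smul_sub, Pi.smul_apply, smul_smul, mul_inv_cancel₀ hc, one_smul]
      rw [e, norm_smul]
      calc ‖c‖ * ‖w i - (c⁻¹ • y) i‖ ≤ ‖c‖ * (ε / 2 / ‖c‖) := by
            gcongr; exact (hwy i).le
        _ = ε / 2 := by field_simp
    calc ‖((T lam) ^ n) x i - y i‖ = ‖(((T lam) ^ n) x i - c • w i) + (c • w i - y i)‖ := by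
          congr 1; abel
      _ ≤ _ := norm_add_le _ _
      _ < ε := by linarith
  refine ⟨{x | ∃ P : Polynomial ℂ, P.coeff 0 = 0 ∧ ∀ i n, x i n = P.eval (u i n)},
    ⟨0, by simp, fun i n => by simp⟩, ?_, ?_, ?_, ?_, ?_⟩
  · rintro x ⟨P, hP, hx⟩ y ⟨R, hR, hy⟩
    refine ⟨P + R, by simp [hP, hR], fun i n => ?_⟩
    rw [Polynomial.eval_add, ← hx, ← hy, Pi.add_apply, lp.coeFn_add, Pi.add_apply]
  · rintro c x ⟨P, hP, hx⟩
    refine ⟨Polynomial.C c * P, by simp [hP], fun i n => ?_⟩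
    rw [Polynomial.eval_mul, Polynomial.eval_C, ← hx, Pi.smul_apply, lp.coeFn_smul, Pi.smul_apply,
      smul_eq_mul]
  · rintro x ⟨P, hP, hx⟩ y ⟨R, hR, hy⟩
    have hPR : (P * R).coeff 0 = 0 := by simp [hP]
    obtain ⟨z, hz⟩ := hex (P * R) hPR
    refine ⟨z, ⟨P * R, hPR, hz⟩, fun i n => ?_⟩
    rw [hz, hx, hy, Polynomial.eval_mul]
  · obtain ⟨x, hx⟩ := hex Polynomial.X (by simp)
    refine ⟨x, ⟨Polynomial.X, by simp, hx⟩, ?_⟩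
    intro h0
    have hd1 := key Polynomial.X (by simp) Polynomial.X_ne_zero x hx (fun _ => 1) (fun _ => one_pos)
    have hsub : (Set.range fun n : ℕ => ((T fun _ => 1) ^ (n + 1)) x) ⊆ {0} := by
      rintro _ ⟨n, rfl⟩
      simp [h0]
    have hd2 := (hd1.mono hsub).closure_eq
    rw [closure_singleton] at hd2
    have hmem : (fun _ => lp.single p 0 1 : Fin d → lpC p) ∈ ({0} : Set (Fin d → lpC p)) := by
      rw [hd2]; trivial
    have h3 := congrFun (Set.mem_singleton_iff.1 hmem) ⟨0, hd⟩
    have h4 : (lp.single p 0 1 : lpC p) 0 = (0 : lpC p) 0 := by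
      rw [show (lp.single p 0 1 : lpC p) = 0 from h3]
    rw [lp.single_apply_self] at h4
    simp at h4
  · rintro x ⟨P, hP, hx⟩ hx0 lam hlam
    refine key P hP ?_ x hx lam hlam
    rintro rfl
    apply hx0
    ext i n
    rw [hx]; simp
end
end
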